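/- arXiv:0906.2296 — 10 statements merged into one kernel-verified Lean document; each statement's English description precedes it below -/
import Mathlib

section
/- Let n ≥ 3, μ > 0, and M be a positive integer. There exist real constants α_{j,k} (0 ≤ j ≤ k ≤ M+1) with α_{k,k} = 1, and real constants β_{l,m,k} (1 ≤ k ≤ M+1, 1 ≤ l ≤ k, m = (m₁,…,m_l) ∈ (ℕ∪{0})^l with |m| := m₁+⋯+m_l ≤ k−l) such that the following holds: for every A₀ ∈ C^M((0,∞); ℂ) for which m₀(r) := ∫₀^r |A₀(s)|² s^{n−1} ds is finite for all r > 0, setting ρ₀ := |A₀|² and v₀(r) := √(2μ m₀(r)/((n−2) r^{n−2})), at every r > 0 with v₀(r) > 0 the function v₀ is (M+1)-times differentiable and for every k ∈ {1,…,M+1} one has Σ_{j=0}^k α_{j,k} r^j v₀^{(j)}(r) = Σ_{l=1}^k Σ_{m ∈ (ℕ∪{0})^l, |m| ≤ k−l} β_{l,m,k} · (∏_{i=1}^l ρ₀^{(m_i)}(r)) · r^{2l+|m|} / v₀(r)^{2l−1}. -/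
open MeasureTheory Set

noncomputable def TT (p : (l : ℕ) × (Fin l → ℕ)) : (ℝ → ℝ) → (ℝ → ℝ) → ℝ → ℝ := fun ρ v r =>
  (∏ i, iteratedDeriv (p.2 i) ρ r) * r ^ (2 * p.1 + ∑ i, p.2 i) / v r ^ (2 * p.1 - 1)

def IX (k : ℕ) : Finset ((l : ℕ) × (Fin l → ℕ)) :=
  (Finset.Icc 1 k).sigma fun l =>
    (Fintype.piFinset fun _ : Fin l => Finset.range (k - l + 1)).filter
      (fun m => ∑ i, m i ≤ k - l)

lemma mem_IX (k : ℕ) (p : (l : ℕ) × (Fin l → ℕ)) :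
    p ∈ IX k ↔ 1 ≤ p.1 ∧ p.1 ≤ k ∧ ∑ i, p.2 i ≤ k - p.1 := by
  simp only [IX, Finset.mem_sigma, Finset.mem_Icc, Finset.mem_filter, Fintype.mem_piFinset,
    Finset.mem_range]
  constructor
  · rintro ⟨⟨h1, h2⟩, _, h3⟩
    exact ⟨h1, h2, h3⟩
  · rintro ⟨h1, h2, h3⟩
    refine ⟨⟨h1, h2⟩, fun i => ?_, h3⟩
    have := Finset.single_le_sum (f := p.2) (fun _ _ => Nat.zero_le _) (Finset.mem_univ i)
    omega

def SS (k : ℕ) : Submodule ℝ ((ℝ → ℝ) → (ℝ → ℝ) → ℝ → ℝ) :=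
  Submodule.span ℝ (TT '' (IX k : Set ((l : ℕ) × (Fin l → ℕ))))

lemma TT_mem {k : ℕ} {p : (l : ℕ) × (Fin l → ℕ)}
    (h : 1 ≤ p.1 ∧ p.1 ≤ k ∧ ∑ i, p.2 i ≤ k - p.1) : TT p ∈ SS k :=
  Submodule.subset_span ⟨p, Finset.mem_coe.2 ((mem_IX k p).2 h), rfl⟩

def GG (a b : ℝ) (M : ℕ) (ρ v : ℝ → ℝ) : Prop :=
  ∀ r > 0, 0 < v r → ContDiffAt ℝ (M : ℕ∞) ρ r ∧ ContDiffAt ℝ ((M + 1 : ℕ) : ℕ∞) v r ∧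
    deriv v r = (-a * v r + b * ρ r * r ^ 2 / v r) / r

lemma diff_iter {f : ℝ → ℝ} {N j : ℕ} {r : ℝ} (h : ContDiffAt ℝ (N : ℕ∞) f r) (hj : j < N) :
    HasDerivAt (iteratedDeriv j f) (iteratedDeriv (j + 1) f r) r := by
  rw [iteratedDeriv_succ]
  apply DifferentiableAt.hasDerivAt
  have h' : ContDiffWithinAt ℝ (N : ℕ∞) f univ r := h.contDiffWithinAt
  have := h'.differentiableWithinAt_iteratedDerivWithin (m := j) (by exact_mod_cast hj)
    (by simpa using uniqueDiffOn_univ)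
  rw [iteratedDerivWithin_univ] at this
  exact differentiableWithinAt_univ.1 this

lemma TT_deriv (a b : ℝ) (M k : ℕ) (hk : k ≤ M) (p : (l : ℕ) × (Fin l → ℕ)) (hp : p ∈ IX k) :
    ∃ g ∈ SS (k + 1), ∀ ρ v, GG a b M ρ v → ∀ r > 0, 0 < v r →
      HasDerivAt (TT p ρ v) (g ρ v r / r) r := by
  rw [mem_IX] at hp
  obtain ⟨l, m⟩ := p
  obtain ⟨h1, h2, h3⟩ := hp
  simp only at h1 h2 h3
  obtain ⟨q, rfl⟩ : ∃ q, l = q + 1 := ⟨l - 1, by omega⟩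
  set s := ∑ i, m i with hs
  have hupd : ∀ i, ∑ j, Function.update m i (m i + 1) j = s + 1 := by
    intro i
    rw [Finset.sum_update_of_mem (Finset.mem_univ i), hs,
      ← Finset.add_sum_erase _ _ (Finset.mem_univ i), Finset.sdiff_singleton_eq_erase]
    ring
  refine ⟨(∑ i, TT ⟨q + 1, Function.update m i (m i + 1)⟩)
    + ((2 * (q + 1) + s : ℝ) + (2 * q + 1) * a) • TT ⟨q + 1, m⟩
    - ((2 * q + 1) * b) • TT ⟨q + 2, Fin.cons 0 m⟩, ?_, ?_⟩
  · refine Submodule.sub_mem _ (Submodule.add_mem _ (Submodule.sum_mem _ fun i _ => ?_)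
      (Submodule.smul_mem _ _ ?_)) (Submodule.smul_mem _ _ ?_)
    · apply TT_mem
      simp only [hupd]
      omega
    · apply TT_mem
      simp only [← hs]
      omega
    · apply TT_mem
      simp only [Fin.sum_cons, ← hs]
      omega
  · intro ρ v hG r hr hv
    obtain ⟨hρ, hv', hode⟩ := hG r hr hv
    have hvd : HasDerivAt v ((-a * v r + b * ρ r * r ^ 2 / v r) / r) r := by
      rw [← hode]
      exact (hv'.differentiableAt (by simp)).hasDerivAt
    have hP : HasDerivAt (fun x => ∏ i, iteratedDeriv (m i) ρ x) _ r :=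
      HasDerivAt.fun_finsetProd (u := Finset.univ) (fun i _ => diff_iter (j := m i) hρ (by
        have := Finset.single_le_sum (f := m) (fun _ _ => Nat.zero_le _) (Finset.mem_univ i)
        omega))
    have key := (hP.fun_mul (hasDerivAt_pow (2 * (q + 1) + s) r)).fun_div (hvd.fun_pow (2 * q + 1))
      (pow_ne_zero _ hv.ne')
    refine key.congr_deriv ?_
    have hE : ∀ i, TT ⟨q + 1, Function.update m i (m i + 1)⟩ ρ v r =
        ((∏ j ∈ Finset.univ.erase i, iteratedDeriv (m j) ρ r) • iteratedDeriv (m i + 1) ρ r) *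
          (r ^ (2 * (q + 1) + (s + 1)) / v r ^ (2 * q + 1)) := by
      intro i
      simp only [TT, hupd, smul_eq_mul]
      rw [← Finset.mul_prod_erase _ _ (Finset.mem_univ i)]
      rw [Finset.prod_congr rfl (g := fun j => iteratedDeriv (m j) ρ r)]
      · simp only [Function.update_self]
        rw [show 2 * (q + 1) - 1 = 2 * q + 1 by omega]
        ring
      · intro j hj
        rw [Function.update_of_ne (Finset.ne_of_mem_erase hj)]
    simp only [Pi.sub_apply, Pi.add_apply, Pi.smul_apply, Finset.sum_apply, hE, ← Finset.sum_mul]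
    generalize (∑ i, (∏ j ∈ Finset.univ.erase i, iteratedDeriv (m j) ρ r) •
      iteratedDeriv (m i + 1) ρ r) = P'
    simp only [TT, Fin.sum_cons, Fin.prod_univ_succ, Fin.cons_zero, Fin.cons_succ, ← hs,
      iteratedDeriv_zero, smul_eq_mul]
    rw [← Fin.prod_univ_succ (fun i => iteratedDeriv (m i) ρ r)]
    generalize (∏ i, iteratedDeriv (m i) ρ r) = P
    rw [show 2 * (q + 1) - 1 = 2 * q + 1 by omega, show 2 * (q + 2) - 1 = 2 * q + 3 by omega,
      show 2 * (q + 1) + s - 1 = 2 * q + s + 1 by omega, show 2 * q + 1 - 1 = 2 * q by omega]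
    have hr' := hr.ne'
    have hv0 := hv.ne'
    push_cast
    field_simp
    ring

lemma SS_deriv (a b : ℝ) (M k : ℕ) (hk : k ≤ M) (f) (hf : f ∈ SS k) :
    ∃ g ∈ SS (k + 1), ∀ ρ v, GG a b M ρ v → ∀ r > 0, 0 < v r →
      HasDerivAt (f ρ v) (g ρ v r / r) r := by
  unfold SS at hf
  induction hf using Submodule.span_induction with
  | mem x h =>
    obtain ⟨p, hp, rfl⟩ := h
    exact TT_deriv a b M k hk p (Finset.mem_coe.1 hp)
  | zero =>
    refine ⟨0, Submodule.zero_mem _, fun ρ v _ r _ _ => ?_⟩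
    simpa using hasDerivAt_const r (0 : ℝ)
  | add x y _ _ hx hy =>
    obtain ⟨g, hg, hg'⟩ := hx
    obtain ⟨h, hh, hh'⟩ := hy
    refine ⟨g + h, Submodule.add_mem _ hg hh, fun ρ v hG r hr hv => ?_⟩
    exact ((hg' ρ v hG r hr hv).add (hh' ρ v hG r hr hv)).congr_deriv (by simp; ring)
  | smul c x _ hx =>
    obtain ⟨g, hg, hg'⟩ := hx
    refine ⟨c • g, Submodule.smul_mem _ c hg, fun ρ v hG r hr hv => ?_⟩
    exact ((hg' ρ v hG r hr hv).const_smul c).congr_deriv (by simp; ring)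

lemma main_ind (a b : ℝ) (M k : ℕ) (hk : k ≤ M) :
    ∃ α : ℕ → ℝ, α (k + 1) = 1 ∧ ∃ f ∈ SS (k + 1), ∀ ρ v, GG a b M ρ v → ∀ r > 0, 0 < v r →
      ∑ j ∈ Finset.range (k + 2), α j * r ^ j * iteratedDeriv j v r = f ρ v r := by
  induction k with
  | zero =>
    refine ⟨fun j => if j = 0 then a else 1, by simp, b • TT ⟨1, fun _ => 0⟩,
      Submodule.smul_mem _ _ (TT_mem (by simp)), fun ρ v hG r hr hv => ?_⟩
    obtain ⟨-, -, hode⟩ := hG r hr hv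
    simp [Finset.sum_range_succ, hode, TT]
    field_simp
    ring
  | succ k ih =>
    obtain ⟨α, hα, f, hf, hid⟩ := ih (by omega)
    obtain ⟨g, hg, hg'⟩ := SS_deriv a b M (k + 1) hk f hf
    refine ⟨fun j => (if j = k + 2 then 0 else j * α j) + (if j = 0 then 0 else α (j - 1)),
      by simp [hα], g, hg, fun ρ v hG r hr hv => ?_⟩
    obtain ⟨hρ, hv', hode⟩ := hG r hr hv
    have hL : HasDerivAt (fun x => ∑ j ∈ Finset.range (k + 2), α j * x ^ j * iteratedDeriv j v x)
        (∑ j ∈ Finset.range (k + 2), (α j * (j * r ^ (j - 1)) * iteratedDeriv j v r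
          + α j * r ^ j * iteratedDeriv (j + 1) v r)) r := by
      apply HasDerivAt.fun_sum
      intro j hj
      have hj' := Finset.mem_range.1 hj
      exact ((hasDerivAt_pow j r).const_mul (α j)).fun_mul (diff_iter hv' (by omega))
    have hev : (fun x => ∑ j ∈ Finset.range (k + 2), α j * x ^ j * iteratedDeriv j v x)
        =ᶠ[nhds r] f ρ v := by
      filter_upwards [lt_mem_nhds hr, hv'.continuousAt.eventually (lt_mem_nhds hv)] with x hx hvx
      exact hid ρ v hG x hx hvx
    have huniq := hL.unique ((hg' ρ v hG r hr hv).congr_of_eventuallyEq hev)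
    rw [eq_div_iff hr.ne'] at huniq
    rw [← huniq]
    simp only [add_mul, Finset.sum_add_distrib, Finset.sum_mul]
    congr 1
    · rw [Finset.sum_range_succ]
      simp only [if_true, zero_mul, add_zero]
      refine Finset.sum_congr rfl fun j hj => ?_
      have hj' := Finset.mem_range.1 hj
      rw [if_neg (by omega)]
      rcases j with _ | j
      · simp
      · simp only [Nat.add_sub_cancel]
        ring
    · rw [Finset.sum_range_succ']
      simp only [if_true, zero_mul, add_zero]
      refine Finset.sum_congr rfl fun j hj => ?_
      simp
      ring

lemma good (n : ℕ) (hn : 3 ≤ n) (μ : ℝ) (hμ : 0 < μ) (M : ℕ) (A₀ : ℝ → ℂ)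
    (hA : ContDiffOn ℝ (M : ℕ∞) A₀ (Set.Ioi 0)) (ρ₀ m₀ v₀ : ℝ → ℝ)
    (hρ : ∀ r, ρ₀ r = ‖A₀ r‖ ^ 2)
    (hm : ∀ r, m₀ r = ∫ s in (0:ℝ)..r, ‖A₀ s‖ ^ 2 * s ^ (n - 1))
    (hI : ∀ r > (0:ℝ), IntervalIntegrable (fun s => ‖A₀ s‖ ^ 2 * s ^ (n - 1)) volume 0 r)
    (hv : ∀ r, v₀ r = Real.sqrt (2 * μ * m₀ r / (((n : ℝ) - 2) * r ^ (n - 2)))) :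
    GG (((n : ℝ) - 2) / 2) (μ / ((n : ℝ) - 2)) M ρ₀ v₀ := by
  obtain ⟨p, rfl⟩ : ∃ p, n = p + 3 := ⟨n - 3, by omega⟩
  simp only [show p + 3 - 1 = p + 2 by omega, show p + 3 - 2 = p + 1 by omega] at *
  have hc : (((p + 3 : ℕ) : ℝ) - 2) = p + 1 := by push_cast; ring
  simp only [hc] at hv ⊢
  have hp : (0 : ℝ) < p + 1 := by positivity
  have hρ' : ρ₀ = fun r => ‖A₀ r‖ ^ 2 := funext hρ
  have hF : ContDiffOn ℝ (M : ℕ∞) (fun s => ‖A₀ s‖ ^ 2 * s ^ (p + 2)) (Ioi 0) :=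
    (hA.norm_sq ℝ).mul (contDiff_id.pow _).contDiffOn
  have hmd : ∀ r > 0, HasDerivAt m₀ (‖A₀ r‖ ^ 2 * r ^ (p + 2)) r := by
    intro r hr
    rw [show m₀ = _ from funext hm]
    exact intervalIntegral.integral_hasDerivAt_right (hI r hr)
      (hF.continuousOn.stronglyMeasurableAtFilter isOpen_Ioi r hr)
      (hF.continuousOn.continuousAt (Ioi_mem_nhds hr))
  have hmC : ContDiffOn ℝ ((M + 1 : ℕ) : ℕ∞) m₀ (Ioi 0) := by
    have : (((M + 1 : ℕ) : ℕ∞) : WithTop ℕ∞) = ((M : ℕ∞) : WithTop ℕ∞) + 1 := by norm_cast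
    rw [this, contDiffOn_succ_iff_deriv_of_isOpen isOpen_Ioi]
    refine ⟨fun r hr => (hmd r hr).differentiableAt.differentiableWithinAt, ?_,
      hF.congr fun r hr => (hmd r hr).deriv⟩
    intro h
    exact absurd h (by simp)
  intro r hr hvr
  have hpos : 0 < 2 * μ * m₀ r / (((p : ℝ) + 1) * r ^ (p + 1)) := by
    rw [hv r] at hvr
    exact Real.sqrt_pos.1 hvr
  have hden : ((p : ℝ) + 1) * r ^ (p + 1) ≠ 0 := by positivity
  have hvf : v₀ = fun r => Real.sqrt (2 * μ * m₀ r / (((p : ℝ) + 1) * r ^ (p + 1))) := funext hv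
  refine ⟨?_, ?_, ?_⟩
  · rw [hρ']
    exact (hA.contDiffAt (Ioi_mem_nhds hr)).norm_sq ℝ
  · rw [hvf]
    exact ((contDiffAt_const.mul (hmC.contDiffAt (Ioi_mem_nhds hr))).div
      (contDiffAt_const.mul (contDiffAt_id.pow _)) hden).sqrt hpos.ne'
  · have hd := ((((hmd r hr).const_mul (2 * μ)).fun_div
      ((hasDerivAt_pow (p + 1) r).const_mul ((p : ℝ) + 1)) hden).sqrt hpos.ne').deriv
    rw [← hvf, ← hv r] at hd
    rw [hd, hρ r]
    have hsq : v₀ r ^ 2 = 2 * μ * m₀ r / (((p : ℝ) + 1) * r ^ (p + 1)) := by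
      rw [hv r, Real.sq_sqrt hpos.le]
    have hm' : m₀ r = v₀ r ^ 2 * (((p : ℝ) + 1) * r ^ (p + 1)) / (2 * μ) := by
      rw [hsq]; field_simp
    rw [hm']
    simp only [Nat.add_sub_cancel]
    push_cast
    field_simp
    ring

/-- Higher-order structural identity for the special initial velocity `v₀` of the
attractive radial Euler–Poisson system: there are universal constants `α_{j,k}`
(with `α_{k,k} = 1`) and `β_{l,m,k}` such that
`∑_{j=0}^k α_{j,k} r^j v₀^{(j)}(r)
  = ∑_{l=1}^k ∑_{|m| ≤ k-l} β_{l,m,k} (∏ᵢ ρ₀^{(mᵢ)}(r)) r^{2l+|m|} / v₀(r)^{2l-1}`. -/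
theorem stmt1 (n : ℕ) (hn : 3 ≤ n) (μ : ℝ) (hμ : 0 < μ) (M : ℕ) (hM : 0 < M) :
    ∃ α : ℕ → ℕ → ℝ, ∃ β : ℕ → (l : ℕ) → (Fin l → ℕ) → ℝ,
      (∀ k ≤ M + 1, α k k = 1) ∧
      ∀ A₀ : ℝ → ℂ, ContDiffOn ℝ (M : ℕ∞) A₀ (Set.Ioi 0) →
        ∀ ρ₀ m₀ v₀ : ℝ → ℝ,
          (∀ r, ρ₀ r = ‖A₀ r‖ ^ 2) →
          (∀ r, m₀ r = ∫ s in (0:ℝ)..r, ‖A₀ s‖ ^ 2 * s ^ (n - 1)) →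
          (∀ r > (0:ℝ), IntervalIntegrable (fun s => ‖A₀ s‖ ^ 2 * s ^ (n - 1)) volume 0 r) →
          (∀ r, v₀ r = Real.sqrt (2 * μ * m₀ r / (((n : ℝ) - 2) * r ^ (n - 2)))) →
          ∀ r > (0:ℝ), 0 < v₀ r →
            (∀ j ≤ M, DifferentiableAt ℝ (iteratedDeriv j v₀) r) ∧
            ∀ k, 1 ≤ k → k ≤ M + 1 →
              ∑ j ∈ Finset.range (k + 1), α j k * r ^ j * iteratedDeriv j v₀ r
                = ∑ l ∈ Finset.Icc 1 k,
                    ∑ m ∈ (Fintype.piFinset fun _ : Fin l => Finset.range (k - l + 1)).filter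
                        (fun m => ∑ i, m i ≤ k - l),
                      β k l m * (∏ i, iteratedDeriv (m i) ρ₀ r) * r ^ (2 * l + ∑ i, m i) /
                        v₀ r ^ (2 * l - 1) := by
  choose! α hα f hf hid using
    fun k (hk : k ≤ M) => main_ind (((n : ℝ) - 2) / 2) (μ / ((n : ℝ) - 2)) M k hk
  have hβ : ∀ k, ∃ c : ((l : ℕ) × (Fin l → ℕ)) → ℝ, k ≤ M → ∑ p ∈ IX (k + 1), c p • TT p = f k := by
    intro k
    by_cases hk : k ≤ M
    · obtain ⟨c, hc⟩ := Submodule.mem_span_image_finset_iff_exists_fun' ℝ |>.1 (hf k hk)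
      exact ⟨c, fun _ => hc⟩
    · exact ⟨0, fun h => absurd h hk⟩
  choose c hc using hβ
  refine ⟨fun j k => if k = 0 then 1 else α (k - 1) j, fun k l m => c (k - 1) ⟨l, m⟩, ?_, ?_⟩
  · intro k hk
    rcases k with _ | k
    · simp
    · simpa using hα k (by omega)
  · intro A₀ hA ρ₀ m₀ v₀ hρ hm hI hv r hr hvr
    have hG := good n hn μ hμ M A₀ hA ρ₀ m₀ v₀ hρ hm hI hv
    refine ⟨fun j hj => (diff_iter (hG r hr hvr).2.1 (by omega)).differentiableAt, ?_⟩
    intro k hk1 hk2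
    obtain ⟨k, rfl⟩ : ∃ q, k = q + 1 := ⟨k - 1, by omega⟩
    have h := hid k (by omega) ρ₀ v₀ hG r hr hvr
    rw [← hc k (by omega)] at h
    simp only [Nat.add_sub_cancel, Nat.succ_ne_zero, if_false]
    refine h.trans ?_
    simp only [Finset.sum_apply, Pi.smul_apply, IX, Finset.sum_sigma, TT, smul_eq_mul]
    refine Finset.sum_congr rfl fun l _ => Finset.sum_congr rfl fun m _ => ?_
    ring
end

section
/- Let n ≥ 3, μ > 0, R > 0, m₀ ≥ 0, and v₀ := √(2μ m₀/((n−2) R^{n−2})). If Y : [0,∞) → (0,∞) is twice continuously differentiable with Y''(t) = −μ m₀ / Y(t)^{n−1} for all t ≥ 0, Y(0) = R, and Y'(0) = v₀, then Y(t) = R·(1 + (n v₀/(2R)) t)^{2/n} for all t ≥ 0. -/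
open Set

theorem const_aux (f f' : ℝ → ℝ) (h : ∀ t ∈ Ici (0:ℝ), HasDerivWithinAt f (f' t) (Ici 0) t)
    (h0 : ∀ t ∈ Ici (0:ℝ), f' t = 0) : ∀ t ∈ Ici (0:ℝ), f t = f 0 := by
  intro t ht
  have ht' : (0:ℝ) ≤ t := ht
  refine constant_of_has_deriv_right_zero (a := 0) (b := t) ?_ ?_ t ⟨ht', le_refl t⟩
  · intro x hx
    exact ((h x hx.1).continuousWithinAt).mono (fun y hy => hy.1)
  · intro x hx
    have h1 := h x hx.1
    rw [h0 x hx.1] at h1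
    exact h1.mono (fun y hy => le_trans hx.1 hy)

/-- Uniqueness of the critically balanced global characteristic of the attractive radial
Euler–Poisson system: any positive C² solution of `Y'' = -μ m₀ / Y^{n-1}` on `[0,∞)` with
`Y(0) = R`, `Y'(0) = v₀ = √(2μ m₀/((n-2) R^{n-2}))` equals `R (1 + (n v₀/(2R)) t)^{2/n}`. -/
theorem stmt3 (n : ℕ) (hn : 3 ≤ n) (μ : ℝ) (hμ : 0 < μ) (R : ℝ) (hR : 0 < R)
    (m₀ : ℝ) (hm₀ : 0 ≤ m₀) (v₀ : ℝ)
    (hv₀ : v₀ = Real.sqrt (2 * μ * m₀ / (((n : ℝ) - 2) * R ^ (n - 2))))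
    (Y Y' : ℝ → ℝ)
    (hpos : ∀ t ∈ Ici (0:ℝ), 0 < Y t)
    (hY : ∀ t ∈ Ici (0:ℝ), HasDerivWithinAt Y (Y' t) (Ici 0) t)
    (hY' : ∀ t ∈ Ici (0:ℝ), HasDerivWithinAt Y' (-μ * m₀ / Y t ^ (n - 1)) (Ici 0) t)
    (hY'cont : ContinuousOn Y' (Ici 0))
    (hY0 : Y 0 = R) (hY'0 : Y' 0 = v₀) :
    ∀ t ∈ Ici (0:ℝ), Y t = R * (1 + (n : ℝ) * v₀ / (2 * R) * t) ^ ((2:ℝ) / n) := by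
  obtain ⟨k, rfl⟩ : ∃ k, n = k + 3 := ⟨n - 3, by omega⟩
  have e1 : k + 3 - 2 = k + 1 := by omega
  have e2 : k + 3 - 1 = k + 2 := by omega
  simp only [e1, e2] at hv₀ hY'
  have hk : (0:ℝ) < (k:ℝ) + 1 := by positivity
  obtain ⟨c, hc⟩ : ∃ c : ℝ, c = 2 * μ * m₀ / ((k:ℝ) + 1) := ⟨_, rfl⟩
  have hc2 : c * ((k:ℝ) + 1) = 2 * μ * m₀ := by rw [hc]; field_simp
  have hv2 : v₀ ^ 2 = c * (R ^ (k + 1))⁻¹ := by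
    have e3 : (((k + 3 : ℕ) : ℝ) - 2) = (k:ℝ) + 1 := by push_cast; ring
    rw [hv₀, e3, Real.sq_sqrt (by positivity), hc]
    field_simp
  have hv0 : 0 ≤ v₀ := by rw [hv₀]; exact Real.sqrt_nonneg _
  have hE : ∀ t ∈ Ici (0:ℝ), Y' t ^ 2 * Y t ^ (k + 1) = c := by
    intro t ht
    have := const_aux (fun t => Y' t ^ 2 - c * (Y t ^ (k + 1))⁻¹) _
      (fun t ht => ((hY' t ht).pow 2).sub
        ((((hY t ht).pow (k + 1)).inv (pow_pos (hpos t ht) _).ne').const_mul c)) (by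
        intro t ht
        have hp := hpos t ht
        have : c = 2 * μ * m₀ / ((k:ℝ) + 1) := hc
        subst this
        push_cast
        simp only [Pi.pow_apply, Nat.add_sub_cancel]
        field_simp
        ring) t ht
    simp only [hY0, hY'0, hv2, sub_self] at this
    have hp := hpos t ht
    have h3 : Y' t ^ 2 = c * (Y t ^ (k + 1))⁻¹ := by linarith
    rw [h3]; field_simp
  have hc3 : c = v₀ ^ 2 * R ^ (k + 1) := by rw [hv2]; field_simp
  have hF : ∀ t ∈ Ici (0:ℝ), Y t ^ (k + 2) * Y' t - ((k:ℝ) + 3) * c / 2 * t = R ^ (k + 2) * v₀ := by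
    intro t ht
    have := const_aux (fun t => Y t ^ (k + 2) * Y' t - ((k:ℝ) + 3) * c / 2 * t) _
      (fun t ht => (((hY t ht).pow (k + 2)).mul (hY' t ht)).sub
        ((hasDerivWithinAt_id t _).const_mul (((k:ℝ) + 3) * c / 2))) (by
        intro t ht
        have hp := hpos t ht
        have h1 := hE t ht
        have h2 : Y t ^ (k + 2) * (-μ * m₀ / Y t ^ (k + 2)) = - (μ * m₀) := by field_simp
        simp only [Pi.pow_apply]
        rw [h2]
        have e4 : k + 2 - 1 = k + 1 := by omega
        rw [e4]
        push_cast
        linear_combination ((k:ℝ) + 2) * h1 + hc2 / 2) t ht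
    simpa only [hY0, hY'0, mul_zero, sub_zero] using this
  have hG : ∀ t ∈ Ici (0:ℝ), Y t ^ (k + 3) = R ^ (k + 3) * (1 + ((k:ℝ) + 3) * v₀ / (2 * R) * t) ^ 2 := by
    intro t ht
    have := const_aux (fun t => Y t ^ (k + 3) - (((k:ℝ) + 3) * (R ^ (k + 2) * v₀) * t
        + ((k:ℝ) + 3) ^ 2 * c / 4 * t ^ 2)) _
      (fun t ht => ((hY t ht).pow (k + 3)).sub
        (((hasDerivWithinAt_id t _).const_mul (((k:ℝ) + 3) * (R ^ (k + 2) * v₀))).add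
        (((hasDerivWithinAt_id t _).pow 2).const_mul (((k:ℝ) + 3) ^ 2 * c / 4)))) (by
        intro t ht
        have h1 := hF t ht
        have e4 : k + 3 - 1 = k + 2 := by omega
        rw [e4]
        push_cast
        simp only [id]
        linear_combination ((k:ℝ) + 3) * h1) t ht
    simp only [hY0] at this
    have h4 : Y t ^ (k + 3) = R ^ (k + 3) + (((k:ℝ) + 3) * (R ^ (k + 2) * v₀) * t
        + ((k:ℝ) + 3) ^ 2 * c / 4 * t ^ 2) := by linarith
    rw [h4, hc3]
    field_simp
    ring
  intro t ht
  have ht' : (0:ℝ) ≤ t := ht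
  have hp := hpos t ht
  have hb : 0 ≤ 1 + ((k + 3 : ℕ) : ℝ) * v₀ / (2 * R) * t := by positivity
  refine (pow_left_inj₀ hp.le (by positivity) (by omega : k + 3 ≠ 0)).1 ?_
  rw [hG t ht, mul_pow, ← Real.rpow_mul_natCast hb]
  have e5 : (2:ℝ) / ((k + 3 : ℕ) : ℝ) * ((k + 3 : ℕ) : ℝ) = (2 : ℕ) := by
    push_cast; field_simp
  rw [e5, Real.rpow_natCast]
  push_cast
  ring
end

section
/- Let μ > 0, m₀ > 0, R > 0, and v₀ ∈ ℝ. If X : [0,T) → (0,∞) is twice continuously differentiable with X''(t) = −μ m₀ / X(t) for all t ∈ [0,T), X(0) = R, and X'(0) = v₀, then X(t) ≤ R·exp(v₀²/(2μ m₀)) for all t ∈ [0,T). Moreover, there is no such solution with T = ∞: every positive solution reaches zero in finite time. -/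
open Set

lemma aux_mono (b : ℝ) (hb : 0 ≤ b) (f f' : ℝ → ℝ)
    (hf : ∀ t ∈ Icc (0:ℝ) b, HasDerivWithinAt f (f' t) (Icc 0 b) t)
    (hn : ∀ t ∈ Icc (0:ℝ) b, f' t ≤ 0) : f b ≤ f 0 := by
  have h : AntitoneOn f (Icc 0 b) := by
    refine antitoneOn_of_hasDerivWithinAt_nonpos (f' := f') (convex_Icc 0 b)
      (fun t ht => (hf t ht).continuousWithinAt) ?_ ?_
    · intro x hx
      exact (hf x (interior_subset hx)).mono interior_subset
    · intro x hx
      exact hn x (interior_subset hx)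
  exact h (left_mem_Icc.2 hb) (right_mem_Icc.2 hb) hb

lemma aux_bound (k : ℝ) (hk : 0 < k) (b : ℝ) (hb : 0 ≤ b) (X X' : ℝ → ℝ)
    (hp : ∀ t ∈ Icc (0:ℝ) b, 0 < X t)
    (h1 : ∀ t ∈ Icc (0:ℝ) b, HasDerivWithinAt X (X' t) (Icc 0 b) t)
    (h2 : ∀ t ∈ Icc (0:ℝ) b, HasDerivWithinAt X' (-k / X t) (Icc 0 b) t) :
    X b ≤ X 0 * Real.exp (X' 0 ^ 2 / (2 * k)) := by
  have hE := aux_mono b hb (fun t => X' t ^ 2 + 2 * k * Real.log (X t)) (fun _ => 0)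
    (by
      intro t ht
      have hx := hp t ht
      have := ((h2 t ht).pow 2).add (((h1 t ht).log hx.ne').const_mul (2 * k))
      refine this.congr_deriv ?_
      field_simp
      ring) (fun _ _ => le_rfl)
  have hb0 := hp b (right_mem_Icc.2 hb)
  have h00 := hp 0 (left_mem_Icc.2 hb)
  rw [← Real.log_le_log_iff hb0 (by positivity), Real.log_mul h00.ne' (Real.exp_pos _).ne',
    Real.log_exp]
  have h3 : Real.log (X b) - Real.log (X 0) ≤ X' 0 ^ 2 / (2 * k) := by
    rw [le_div_iff₀ (by positivity)]
    nlinarith [sq_nonneg (X' b)]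
  linarith

/-- Two-dimensional attractive case: any positive solution of `X'' = -μ m₀ / X` on `[0,T)`
with `X(0) = R`, `X'(0) = v₀` satisfies `X(t) ≤ R exp(v₀²/(2μ m₀))`, and there is no such
positive solution global on `[0,∞)`. -/
theorem stmt6 (μ : ℝ) (hμ : 0 < μ) (m₀ : ℝ) (hm₀ : 0 < m₀) (R : ℝ) (hR : 0 < R) (v₀ : ℝ) :
    (∀ T : ℝ, 0 < T → ∀ X X' : ℝ → ℝ,
        (∀ t ∈ Ico (0:ℝ) T, 0 < X t) →
        (∀ t ∈ Ico (0:ℝ) T, HasDerivWithinAt X (X' t) (Ico 0 T) t) →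
        (∀ t ∈ Ico (0:ℝ) T, HasDerivWithinAt X' (-μ * m₀ / X t) (Ico 0 T) t) →
        X 0 = R → X' 0 = v₀ →
        ∀ t ∈ Ico (0:ℝ) T, X t ≤ R * Real.exp (v₀ ^ 2 / (2 * μ * m₀))) ∧
    (¬ ∃ X X' : ℝ → ℝ,
        (∀ t ∈ Ici (0:ℝ), 0 < X t) ∧
        (∀ t ∈ Ici (0:ℝ), HasDerivWithinAt X (X' t) (Ici 0) t) ∧
        (∀ t ∈ Ici (0:ℝ), HasDerivWithinAt X' (-μ * m₀ / X t) (Ici 0) t) ∧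
        X 0 = R ∧ X' 0 = v₀) := by
  have hk : 0 < μ * m₀ := mul_pos hμ hm₀
  constructor
  · intro T hT X X' hp h1 h2 h0 h0' t ht
    have hs : Icc 0 t ⊆ Ico 0 T := fun s hs => ⟨hs.1, hs.2.trans_lt ht.2⟩
    have := aux_bound (μ * m₀) hk t ht.1 X X' (fun s h => hp s (hs h))
      (fun s h => (h1 s (hs h)).mono hs)
      (fun s h => by simpa only [neg_mul] using (h2 s (hs h)).mono hs)
    rwa [h0, h0', ← mul_assoc] at this
  · rintro ⟨X, X', hp, h1, h2, h0, h0'⟩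
    have hs : ∀ t : ℝ, Icc 0 t ⊆ Ici 0 := fun t s hs => hs.1
    obtain ⟨M, hM⟩ : ∃ M, M = X 0 * Real.exp (X' 0 ^ 2 / (2 * (μ * m₀))) := ⟨_, rfl⟩
    have hb : ∀ t, 0 ≤ t → X t ≤ M := by
      intro t ht
      rw [hM]
      exact aux_bound (μ * m₀) hk t ht X X' (fun s h => hp s (hs t h))
        (fun s h => (h1 s (hs t h)).mono (hs t))
        (fun s h => by simpa only [neg_mul] using (h2 s (hs t h)).mono (hs t))
    have hM0 : 0 < M := (hp 0 (mem_Ici.2 le_rfl)).trans_le (hb 0 le_rfl)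
    obtain ⟨c, hc⟩ : ∃ c, c = μ * m₀ / M := ⟨_, rfl⟩
    have hc0 : 0 < c := by rw [hc]; positivity
    have hv : ∀ t, 0 ≤ t → X' t + c * t ≤ v₀ := by
      intro t ht
      have := aux_mono t ht (fun s => X' s + c * s) (fun s => -μ * m₀ / X s + c * 1)
        (fun s h => ((h2 s (hs t h)).mono (hs t)).add ((hasDerivWithinAt_id s _).const_mul c))
        (by
          intro s h
          have : μ * m₀ / M ≤ μ * m₀ / X s :=
            div_le_div_of_nonneg_left hk.le (hp s (hs t h)) (hb s h.1)
          rw [neg_mul, neg_div, hc]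
          linarith)
      simpa [h0'] using this
    have hx : ∀ t, 0 ≤ t → X t + (c / 2 * t ^ 2 - v₀ * t) ≤ R := by
      intro t ht
      have := aux_mono t ht (fun s => X s + (c / 2 * s ^ 2 - v₀ * s))
        (fun s => X' s + (c * s - v₀))
        (by
          intro s h
          have h3 : HasDerivWithinAt (fun s : ℝ => c / 2 * s ^ 2 - v₀ * s) (c * s - v₀)
              (Icc 0 t) s := by
            refine ((((hasDerivWithinAt_id s _).pow 2).const_mul (c / 2)).sub
              ((hasDerivWithinAt_id s _).const_mul v₀)).congr_deriv ?_
            simp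
            ring
          exact ((h1 s (hs t h)).mono (hs t)).add h3)
        (by
          intro s h
          have := hv s h.1
          linarith)
      simpa [h0] using this
    obtain ⟨t, ht⟩ : ∃ t, t = 1 + 2 * (|v₀| + R) / c := ⟨_, rfl⟩
    have ht1 : 1 ≤ t := by
      rw [ht]
      have : 0 ≤ 2 * (|v₀| + R) / c := by positivity
      linarith
    have hct : c / 2 * t = c / 2 + (|v₀| + R) := by
      rw [ht]; field_simp
    have h5 := hx t (by linarith)
    have h6 := hp t (mem_Ici.2 (by linarith))
    have h7 : c / 2 * t ^ 2 = (c / 2 + (|v₀| + R)) * t := by rw [← hct]; ring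
    have h8 : v₀ * t ≤ |v₀| * t := mul_le_mul_of_nonneg_right (le_abs_self _) (by linarith)
    have h9 : R ≤ R * t := le_mul_of_one_le_right hR.le ht1
    have h10 : 0 < c / 2 * t := by positivity
    rw [h7] at h5
    linarith
end

section
/- Let n ≥ 3, μ > 0, m₀ > 0, R > 0, and v₀ ∈ ℝ, and set A := 2μ m₀/(n−2) and C := v₀² − A/R^{n−2}. Suppose C < 0. Then any twice continuously differentiable X : [0,T) → (0,∞) with X''(t) = −μ m₀ / X(t)^{n−1}, X(0) = R, X'(0) = v₀ satisfies X(t) ≤ (A/|C|)^{1/(n−2)} for all t ∈ [0,T); moreover there is no such solution with T = ∞: every positive solution reaches zero in finite time. -/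
open Set

lemma aux_anti {D : Set ℝ} (hD : Convex ℝ D) {f f' : ℝ → ℝ}
    (h : ∀ t ∈ D, HasDerivWithinAt f (f' t) D t) (h0 : ∀ t ∈ D, f' t ≤ 0) : AntitoneOn f D :=
  antitoneOn_of_hasDerivWithinAt_nonpos hD (fun t ht => (h t ht).continuousWithinAt)
    (fun t ht => (h t (interior_subset ht)).mono interior_subset)
    (fun t ht => h0 t (interior_subset ht))

lemma aux_bound_s8 (k : ℕ) (hk : 1 ≤ k) (M A C : ℝ) (hA : A * k = 2 * M) (hM : 0 < M)
    (hC : C < 0) (D : Set ℝ) (hD : Convex ℝ D) (h0D : (0:ℝ) ∈ D) (hDn : ∀ t ∈ D, 0 ≤ t)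
    (X X' : ℝ → ℝ) (hpos : ∀ t ∈ D, 0 < X t)
    (h1 : ∀ t ∈ D, HasDerivWithinAt X (X' t) D t)
    (h2 : ∀ t ∈ D, HasDerivWithinAt X' (-M / X t ^ (k + 1)) D t)
    (hE : C = X' 0 ^ 2 - A / X 0 ^ k) (t : ℝ) (ht : t ∈ D) :
    X t ≤ (A / |C|) ^ ((1:ℝ) / (k:ℝ)) := by
  have hk0 : (0:ℝ) < k := by exact_mod_cast hk
  have hanti : AntitoneOn (fun t => X' t ^ 2 - A / X t ^ k) D := by
    refine aux_anti hD (f' := fun _ => 0) ?_ (fun _ _ => le_rfl)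
    intro s hs
    have hX := hpos s hs
    have := ((h2 s hs).pow 2).sub (((h1 s hs).pow k).inv (pow_ne_zero k hX.ne') |>.const_mul A)
    refine (this.congr_deriv ?_).congr_of_eventuallyEq ?_ ?_
    · obtain ⟨j, rfl⟩ : ∃ j, k = j + 1 := ⟨k - 1, by omega⟩
      simp only [Pi.pow_apply, Nat.add_sub_cancel]
      have : M = A * ((j + 1 : ℕ) : ℝ) / 2 := by linarith
      rw [this]
      field_simp
      push_cast
      ring
    · exact Filter.Eventually.of_forall fun x => by simp [div_eq_mul_inv]
    · simp [div_eq_mul_inv]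
  have h := hanti h0D ht (hDn t ht)
  simp only [← hE] at h
  have hX := hpos t ht
  have h3 : -C ≤ A / X t ^ k := by nlinarith [sq_nonneg (X' t)]
  rw [le_div_iff₀ (by positivity)] at h3
  rw [abs_of_neg hC]
  have h4 : X t ^ k ≤ A / -C := by
    rw [le_div_iff₀ (by linarith)]; linarith
  calc X t = (X t ^ k) ^ ((1:ℝ) / (k:ℝ)) := by
        rw [one_div, Real.pow_rpow_inv_natCast hX.le (by omega)]
    _ ≤ _ := Real.rpow_le_rpow (by positivity) h4 (by positivity)

lemma aux_global (k : ℕ) (M B : ℝ) (hM : 0 < M)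
    (X X' : ℝ → ℝ) (hpos : ∀ t ∈ Ici (0:ℝ), 0 < X t)
    (h1 : ∀ t ∈ Ici (0:ℝ), HasDerivWithinAt X (X' t) (Ici 0) t)
    (h2 : ∀ t ∈ Ici (0:ℝ), HasDerivWithinAt X' (-M / X t ^ (k + 1)) (Ici 0) t)
    (hB : ∀ t ∈ Ici (0:ℝ), X t ≤ B) : False := by
  have h00 : (0:ℝ) ∈ Ici (0:ℝ) := by simp
  have hB0 : 0 < B := (hpos 0 h00).trans_le (hB 0 h00)
  obtain ⟨c, hc⟩ : ∃ c, c = M / B ^ (k + 1) := ⟨_, rfl⟩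
  have hc0 : 0 < c := by rw [hc]; positivity
  have a1 : AntitoneOn (fun t => X' t + c * t) (Ici 0) := by
    refine aux_anti (convex_Ici 0) (f' := fun t => -M / X t ^ (k + 1) + c * 1)
      (fun t ht => (h2 t ht).add ((hasDerivWithinAt_id t _).const_mul c)) ?_
    intro t ht
    have hX := hpos t ht
    have : M / B ^ (k + 1) ≤ M / X t ^ (k + 1) := by
      have := hB t ht
      gcongr
    rw [neg_div, hc]; linarith
  have b1 : ∀ t ∈ Ici (0:ℝ), X' t + c * t ≤ X' 0 := fun t ht => by
    simpa using a1 h00 ht ht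
  have a2 : AntitoneOn (fun t => X t + (c / 2 * t ^ 2 - X' 0 * t)) (Ici 0) := by
    refine aux_anti (convex_Ici 0)
      (f' := fun t => X' t + (c / 2 * (2 * t) - X' 0 * 1)) ?_ ?_
    · intro t ht
      refine (h1 t ht).add (HasDerivWithinAt.sub ?_ ((hasDerivWithinAt_id t _).const_mul _))
      have := (hasDerivAt_pow 2 t).hasDerivWithinAt (s := Ici 0)
      simpa using this.const_mul (c / 2)
    · intro t ht
      have := b1 t ht
      linarith
  have b2 : ∀ t ∈ Ici (0:ℝ), X t + (c / 2 * t ^ 2 - X' 0 * t) ≤ X 0 := fun t ht => by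
    simpa using a2 h00 ht ht
  have hX0 := hpos 0 h00
  obtain ⟨t, htd⟩ : ∃ t, t = 2 * (|X' 0| + X 0) / c + 1 := ⟨_, rfl⟩
  have ht1 : 1 ≤ t := by
    have : 0 ≤ 2 * (|X' 0| + X 0) / c := by positivity
    linarith
  have hct : c * t = 2 * (|X' 0| + X 0) + c := by rw [htd]; field_simp
  have ht : t ∈ Ici (0:ℝ) := by simp only [mem_Ici]; linarith
  have e1 := b2 t ht
  have e2 := hpos t ht
  have e3 : c / 2 * t ^ 2 = (|X' 0| + X 0 + c / 2) * t := by
    have : c / 2 * t ^ 2 = (c * t) / 2 * t := by ring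
    rw [this, hct]; ring
  have e4 : X' 0 * t ≤ |X' 0| * t := by
    have := le_abs_self (X' 0)
    gcongr
  nlinarith

/-- Below the critical threshold (`C < 0`) the characteristic of the attractive radial
Euler–Poisson system stays below `(A/|C|)^{1/(n-2)}` and cannot be global: finite-time
breakdown occurs. -/
theorem stmt8 (n : ℕ) (hn : 3 ≤ n) (μ : ℝ) (hμ : 0 < μ) (m₀ : ℝ) (hm₀ : 0 < m₀)
    (R : ℝ) (hR : 0 < R) (v₀ : ℝ) (A C : ℝ)
    (hA : A = 2 * μ * m₀ / ((n : ℝ) - 2)) (hC : C = v₀ ^ 2 - A / R ^ (n - 2))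
    (hCneg : C < 0) :
    (∀ T : ℝ, 0 < T → ∀ X X' : ℝ → ℝ,
        (∀ t ∈ Ico (0:ℝ) T, 0 < X t) →
        (∀ t ∈ Ico (0:ℝ) T, HasDerivWithinAt X (X' t) (Ico 0 T) t) →
        (∀ t ∈ Ico (0:ℝ) T, HasDerivWithinAt X' (-μ * m₀ / X t ^ (n - 1)) (Ico 0 T) t) →
        X 0 = R → X' 0 = v₀ →
        ∀ t ∈ Ico (0:ℝ) T, X t ≤ (A / |C|) ^ ((1:ℝ) / ((n : ℝ) - 2))) ∧
    (¬ ∃ X X' : ℝ → ℝ,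
        (∀ t ∈ Ici (0:ℝ), 0 < X t) ∧
        (∀ t ∈ Ici (0:ℝ), HasDerivWithinAt X (X' t) (Ici 0) t) ∧
        (∀ t ∈ Ici (0:ℝ), HasDerivWithinAt X' (-μ * m₀ / X t ^ (n - 1)) (Ici 0) t) ∧
        X 0 = R ∧ X' 0 = v₀) := by
  obtain ⟨k, rfl⟩ : ∃ k, n = k + 2 := ⟨n - 2, by omega⟩
  have hk : 1 ≤ k := by omega
  have hk0 : (0:ℝ) < k := by exact_mod_cast hk
  have e1 : k + 2 - 1 = k + 1 := by omega
  have e2 : k + 2 - 2 = k := by omega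
  have e3 : ((k + 2 : ℕ) : ℝ) - 2 = k := by push_cast; ring
  rw [e3] at hA
  rw [e2] at hC
  simp only [e1, e3, neg_mul]
  have hM : 0 < μ * m₀ := by positivity
  have hAk : A * k = 2 * (μ * m₀) := by rw [hA]; field_simp
  constructor
  · intro T hT X X' hpos h1 h2 hX0 hX0' t ht
    exact aux_bound_s8 k hk (μ * m₀) A C hAk hM hCneg (Ico 0 T) (convex_Ico 0 T)
      ⟨le_rfl, hT⟩ (fun t ht => ht.1) X X' hpos h1 h2 (by rw [hX0, hX0', hC]) t ht
  · rintro ⟨X, X', hpos, h1, h2, hX0, hX0'⟩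
    exact aux_global k (μ * m₀) _ hM X X' hpos h1 h2
      (aux_bound_s8 k hk (μ * m₀) A C hAk hM hCneg (Ici 0) (convex_Ici 0)
        self_mem_Ici (fun t ht => ht) X X' hpos h1 h2 (by rw [hX0, hX0', hC]))
end

section
/- Let n ≥ 3, μ ∈ ℝ, m₀ ≥ 0, R > 0, and v₀ > 0, and set A := 2μ m₀/(n−2) and C := v₀² − A/R^{n−2}. Suppose C > 0. If X : [0,∞) → (0,∞) is twice continuously differentiable with X''(t) = −μ m₀ / X(t)^{n−1} for all t ≥ 0, X(0) = R, and X'(0) = v₀, then X(t) → ∞, X'(t) → √C, and X(t)/t → √C as t → ∞. -/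
open Set Filter

theorem mono_aux (f f' : ℝ → ℝ) (hf : ∀ t ∈ Ici (0:ℝ), HasDerivWithinAt f (f' t) (Ici 0) t)
    (h : ∀ t ∈ Ici (0:ℝ), 0 ≤ f' t) : MonotoneOn f (Ici 0) := by
  apply monotoneOn_of_hasDerivWithinAt_nonneg (f' := f') (convex_Ici 0)
    (fun t ht => (hf t ht).continuousWithinAt)
  · intro t ht
    exact (hf t (interior_subset ht)).mono interior_subset
  · intro t ht
    exact h t (interior_subset ht)

/-- Above the critical threshold (`C > 0`, `v₀ > 0`) the global characteristic of the radial
Euler–Poisson system grows linearly: `X(t) → ∞`, `X'(t) → √C` and `X(t)/t → √C`. -/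
theorem stmt9 (n : ℕ) (hn : 3 ≤ n) (μ : ℝ) (m₀ : ℝ) (hm₀ : 0 ≤ m₀)
    (R : ℝ) (hR : 0 < R) (v₀ : ℝ) (hv₀ : 0 < v₀) (A C : ℝ)
    (hA : A = 2 * μ * m₀ / ((n : ℝ) - 2)) (hC : C = v₀ ^ 2 - A / R ^ (n - 2))
    (hCpos : 0 < C)
    (X X' : ℝ → ℝ)
    (hpos : ∀ t ∈ Ici (0:ℝ), 0 < X t)
    (hX : ∀ t ∈ Ici (0:ℝ), HasDerivWithinAt X (X' t) (Ici 0) t)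
    (hX' : ∀ t ∈ Ici (0:ℝ), HasDerivWithinAt X' (-μ * m₀ / X t ^ (n - 1)) (Ici 0) t)
    (hX0 : X 0 = R) (hX'0 : X' 0 = v₀) :
    Tendsto X atTop atTop ∧
    Tendsto X' atTop (nhds (Real.sqrt C)) ∧
    Tendsto (fun t => X t / t) atTop (nhds (Real.sqrt C)) := by
  obtain ⟨k, rfl⟩ : ∃ k, n = k + 3 := ⟨n - 3, by omega⟩
  have e1 : k + 3 - 1 = k + 2 := by omega
  have e2 : k + 3 - 2 = k + 1 := by omega
  rw [e1] at hX'
  rw [e2] at hC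
  have hk : (0:ℝ) < (k:ℝ) + 1 := by positivity
  have hA2 : A * ((k:ℝ) + 1) = 2 * (μ * m₀) := by
    rw [hA]; push_cast
    have : (k:ℝ) + 3 - 2 = k + 1 := by ring
    rw [this]; field_simp
  have h00 : (0:ℝ) ∈ Ici (0:ℝ) := self_mem_Ici
  -- energy
  have hE : ∀ t ∈ Ici (0:ℝ), X' t ^ 2 = C + A / X t ^ (k + 1) := by
    have hd : ∀ t ∈ Ici (0:ℝ), HasDerivWithinAt (fun t => X' t ^ 2 - A / X t ^ (k + 1)) 0
        (Ici 0) t := by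
      intro t ht
      have hp := hpos t ht
      have h1 := (hX' t ht).pow 2
      have h2 := (((hX t ht).pow (k + 1)).inv (pow_pos hp _).ne').const_mul A
      have h3 := h1.sub h2
      have h4 := h3.congr_deriv (g' := 0) (by
        simp only [Nat.add_sub_cancel, Pi.pow_apply]
        push_cast
        field_simp
        ring_nf
        linear_combination (X' t * X t ^ (k * 2) * X t ^ 2) * hA2)
      exact h4
    intro t ht
    have := (convex_Ici (0:ℝ)).norm_image_sub_le_of_norm_hasDerivWithin_le (C := 0) hd
      (by simp) h00 ht
    rw [zero_mul] at this
    have := sub_eq_zero.1 (norm_le_zero_iff.1 this)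
    simp only [hX0, hX'0] at this
    linarith
  have hlow : ∃ c > 0, ∀ t ∈ Ici (0:ℝ), c ≤ X' t := by
    rcases le_total 0 (μ * m₀) with hs | hs
    · have hA0 : 0 ≤ A := by
        by_contra hh
        nlinarith [mul_neg_of_neg_of_pos (not_le.1 hh) hk]
      have hge : ∀ t ∈ Ici (0:ℝ), C ≤ X' t ^ 2 := by
        intro t ht
        rw [hE t ht]
        have : 0 ≤ A / X t ^ (k + 1) := div_nonneg hA0 (pow_pos (hpos t ht) _).le
        linarith
      refine ⟨Real.sqrt C, Real.sqrt_pos.2 hCpos, fun t ht => ?_⟩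
      have hpos' : 0 < X' t := by
        by_contra hh
        have hcont : ContinuousOn X' (Icc 0 t) := fun s hs =>
          ((hX' s hs.1).continuousWithinAt).mono Icc_subset_Ici_self
        obtain ⟨s, hs, h0⟩ := intermediate_value_Icc' (mem_Ici.1 ht) hcont
          (show (0:ℝ) ∈ Icc (X' t) (X' 0) from ⟨not_lt.1 hh, by rw [hX'0]; exact hv₀.le⟩)
        have := hge s hs.1
        rw [h0] at this
        norm_num at this
        linarith
      exact Real.sqrt_le_iff.2 ⟨hpos'.le, hge t ht⟩
    · refine ⟨v₀, hv₀, fun t ht => ?_⟩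
      have := mono_aux X' _ hX' (fun t ht => div_nonneg (by linarith)
        (pow_pos (hpos t ht) _).le) h00 ht ht
      rwa [hX'0] at this
  obtain ⟨c, hc, hcX⟩ := hlow
  have hTX : Tendsto X atTop atTop := by
    have hm := mono_aux (fun t => X t - c * t) (fun t => X' t - c * 1)
      (fun t ht => (hX t ht).sub ((hasDerivWithinAt_id t _).const_mul c))
      (fun t ht => by have := hcX t ht; linarith)
    refine tendsto_atTop_mono' _ ?_ (tendsto_id.const_mul_atTop hc)
    filter_upwards [eventually_ge_atTop 0] with t ht
    have := hm h00 ht ht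
    simp only [hX0, id] at this ⊢
    linarith
  have hTX' : Tendsto X' atTop (nhds (Real.sqrt C)) := by
    have h1 : Tendsto (fun t => C + A / X t ^ (k + 1)) atTop (nhds (C + 0)) :=
      tendsto_const_nhds.add (tendsto_const_nhds.div_atTop
        ((tendsto_pow_atTop (Nat.succ_ne_zero k)).comp hTX))
    rw [add_zero] at h1
    refine ((Real.continuous_sqrt.tendsto C).comp h1).congr' ?_
    filter_upwards [eventually_ge_atTop 0] with t ht
    simp only [Function.comp]
    rw [← hE t ht, Real.sqrt_sq (hc.le.trans (hcX t ht))]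
  refine ⟨hTX, hTX', ?_⟩
  set L := Real.sqrt C with hL
  rw [Metric.tendsto_atTop]
  intro ε hε
  obtain ⟨T, hT⟩ := (Metric.tendsto_atTop.1 hTX') (ε / 2) (by positivity)
  set S := max T 0 with hS
  have hS0 : 0 ≤ S := le_max_right _ _
  set K := ‖X S - L * S‖ with hK
  have hK0 : 0 ≤ K := norm_nonneg _
  refine ⟨max S (2 * K / ε + 1), fun t ht => ?_⟩
  have htS : S ≤ t := (le_max_left _ _).trans ht
  have htK : 2 * K / ε + 1 ≤ t := (le_max_right _ _).trans ht
  have ht0 : 0 < t := lt_of_lt_of_le (by positivity) htK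
  have hb := (convex_Ici S).norm_image_sub_le_of_norm_hasDerivWithin_le (C := ε / 2)
    (f := fun t => X t - L * t) (f' := fun t => X' t - L * 1)
    (fun s hs => ((hX s (hS0.trans hs)).mono (Ici_subset_Ici.2 hS0)).sub
      ((hasDerivWithinAt_id s _).const_mul L))
    (fun s hs => by
      have := hT s ((le_max_left _ _).trans hs)
      rw [Real.dist_eq] at this
      rw [mul_one, Real.norm_eq_abs]; exact this.le) self_mem_Ici htS
  have hn1 : ‖X t - L * t‖ ≤ ε / 2 * (t - S) + K := by
    have h3 := norm_add_le ((X t - L * t) - (X S - L * S)) (X S - L * S)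
    rw [sub_add_cancel] at h3
    rw [Real.norm_of_nonneg (sub_nonneg.2 htS)] at hb
    linarith
  have hK2 : K < ε / 2 * t := by
    have : 2 * K / ε < t := by linarith
    rw [div_lt_iff₀ hε] at this
    linarith
  have : X t / t - L = (X t - L * t) / t := by field_simp
  rw [Real.dist_eq, this, abs_div, abs_of_pos ht0, div_lt_iff₀ ht0, ← Real.norm_eq_abs]
  nlinarith [mul_nonneg hε.le hS0]
end

section
/- Let n ≥ 1 be an integer, t ≥ 0, let v₀ : (0,∞) → ℝ be differentiable, and let ρ₀ : (0,∞) → ℝ. Define F(R) := n v₀(R)/(2R), G(R) := v₀'(R) + (n−2) v₀(R)/(2R), and X(t,R) := R·(1 + F(R) t)^{2/n}. Then for every R > 0 with 1 + F(R) t > 0 and 1 + G(R) t ≠ 0, one has ρ₀(R)·R^{n−1} / (X(t,R)^{n−1} · ∂_R X(t,R)) = ρ₀(R)·(1 + F(R) t)^{−1}·(1 + G(R) t)^{−1}. -/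
/-- Lagrangian density formula: for the characteristic flow `X(t,R) = R (1 + F(R)t)^{2/n}`,
the transported density `ρ₀(R) R^{n-1} / (X^{n-1} ∂_R X)` equals
`ρ₀(R) (1 + F(R)t)⁻¹ (1 + G(R)t)⁻¹`. -/
theorem stmt12 (n : ℕ) (hn : 1 ≤ n) (t : ℝ) (ht : 0 ≤ t)
    (v₀ : ℝ → ℝ) (hv : ∀ R > (0:ℝ), DifferentiableAt ℝ v₀ R)
    (ρ₀ : ℝ → ℝ)
    (F G X : ℝ → ℝ)
    (hF : ∀ R, F R = (n : ℝ) * v₀ R / (2 * R))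
    (hG : ∀ R, G R = deriv v₀ R + ((n : ℝ) - 2) * v₀ R / (2 * R))
    (hX : ∀ R, X R = R * (1 + F R * t) ^ ((2:ℝ) / n)) :
    ∀ R > (0:ℝ), 0 < 1 + F R * t → 1 + G R * t ≠ 0 →
      ρ₀ R * R ^ (n - 1) / (X R ^ (n - 1) * deriv X R)
        = ρ₀ R * (1 + F R * t)⁻¹ * (1 + G R * t)⁻¹ := by
  intro R hR hA hGne
  obtain ⟨m, rfl⟩ : ∃ m, n = m + 1 := ⟨n - 1, by omega⟩
  have hn0 : ((m + 1 : ℕ) : ℝ) ≠ 0 := by positivity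
  have hFe : F = fun R => ((m + 1 : ℕ) : ℝ) * v₀ R / (2 * R) := funext hF
  have hXe : X = fun R => R * (1 + F R * t) ^ ((2:ℝ) / ((m + 1 : ℕ) : ℝ)) := funext hX
  have hFd : HasDerivAt F ((((m + 1 : ℕ) : ℝ) * deriv v₀ R * (2 * R)
      - ((m + 1 : ℕ) : ℝ) * v₀ R * (2 * 1)) / (2 * R) ^ 2) R := by
    rw [hFe]
    exact (((hv R hR).hasDerivAt).const_mul _).div ((hasDerivAt_id R).const_mul 2)
      (by simpa using hR.ne')
  have hXd := (hasDerivAt_id R).mul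
    (((hFd.mul_const t).const_add 1).rpow_const (p := (2:ℝ) / ((m + 1 : ℕ) : ℝ)) (Or.inl hA.ne'))
  have hAB : ((1 + F R * t) ^ ((2:ℝ) / ((m + 1 : ℕ) : ℝ))) ^ (m + 1) = (1 + F R * t) ^ 2 := by
    rw [← Real.rpow_natCast, ← Real.rpow_mul hA.le, div_mul_cancel₀ _ hn0]
    exact Real.rpow_natCast _ 2
  have hd : deriv X R = (1 + F R * t) ^ ((2:ℝ) / ((m + 1 : ℕ) : ℝ)) / (1 + F R * t)
      * (1 + G R * t) := by
    rw [hXe]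
    refine hXd.deriv.trans ?_
    rw [Real.rpow_sub_one hA.ne']
    have hG' : 1 + G R * t = (1 + F R * t) + (deriv v₀ R - v₀ R / R) * t := by
      rw [hG, hF]; field_simp; ring
    rw [hG']
    generalize (1 + F R * t) ^ ((2:ℝ) / ((m + 1 : ℕ) : ℝ)) = B
    generalize 1 + F R * t = A at *
    have := hA.ne'
    simp only [id]
    field_simp
  have key : X R ^ m * deriv X R = R ^ m * ((1 + F R * t) * (1 + G R * t)) := by
    rw [hd, hX, mul_pow]
    have := hA.ne'
    generalize (1 + F R * t) ^ ((2:ℝ) / ((m + 1 : ℕ) : ℝ)) = B at *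
    generalize 1 + F R * t = A at *
    rw [pow_succ] at hAB
    field_simp
    linear_combination hAB
  rw [Nat.add_sub_cancel, key]
  have := hA.ne'
  field_simp
end

section
/- Let n ≥ 1 be an integer, t ≥ 0, let v₀ : (0,∞) → ℝ be differentiable, and let A₀ : (0,∞) → ℂ. Define F(R) := n v₀(R)/(2R), G(R) := v₀'(R) + (n−2) v₀(R)/(2R), X(t,R) := R·(1 + F(R) t)^{2/n}, and a(t,R) := A₀(R)·(1 + F(R) t)^{−1/2}·(1 + G(R) t)^{−1/2}. Then for every R > 0 with 1 + F(R) t > 0 and 1 + G(R) t > 0, one has |a(t,R)|²·X(t,R)^{n−1}·∂_R X(t,R) = |A₀(R)|²·R^{n−1}. Consequently, if these positivity conditions hold for all R > 0, then ∫₀^∞ |a(t,R)|² X(t,R)^{n−1} ∂_R X(t,R) dR = ∫₀^∞ |A₀(R)|² R^{n−1} dR. -/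
open MeasureTheory

/-- Conservation of the `L²` norm in Lagrangian coordinates: for the amplitude
`a(t,R) = A₀(R) (1 + F(R)t)^{-1/2} (1 + G(R)t)^{-1/2}` along the characteristic flow
`X(t,R) = R (1 + F(R)t)^{2/n}`, one has `|a|² X^{n-1} ∂_R X = |A₀|² R^{n-1}` pointwise,
hence `∫₀^∞ |a|² X^{n-1} ∂_R X dR = ∫₀^∞ |A₀|² R^{n-1} dR`. -/
theorem stmt13 (n : ℕ) (hn : 1 ≤ n) (t : ℝ) (ht : 0 ≤ t)
    (v₀ : ℝ → ℝ) (hv : ∀ R > (0:ℝ), DifferentiableAt ℝ v₀ R)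
    (A₀ : ℝ → ℂ)
    (F G X : ℝ → ℝ) (a : ℝ → ℂ)
    (hF : ∀ R, F R = (n : ℝ) * v₀ R / (2 * R))
    (hG : ∀ R, G R = deriv v₀ R + ((n : ℝ) - 2) * v₀ R / (2 * R))
    (hX : ∀ R, X R = R * (1 + F R * t) ^ ((2:ℝ) / n))
    (ha : ∀ R, a R = A₀ R *
      (((1 + F R * t) ^ (-(1:ℝ) / 2) * (1 + G R * t) ^ (-(1:ℝ) / 2) : ℝ) : ℂ)) :
    (∀ R > (0:ℝ), 0 < 1 + F R * t → 0 < 1 + G R * t →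
      ‖a R‖ ^ 2 * X R ^ (n - 1) * deriv X R = ‖A₀ R‖ ^ 2 * R ^ (n - 1)) ∧
    ((∀ R > (0:ℝ), 0 < 1 + F R * t ∧ 0 < 1 + G R * t) →
      ∫ R in Set.Ioi (0:ℝ), ‖a R‖ ^ 2 * X R ^ (n - 1) * deriv X R
        = ∫ R in Set.Ioi (0:ℝ), ‖A₀ R‖ ^ 2 * R ^ (n - 1)) := by
  have key : ∀ R > (0:ℝ), 0 < 1 + F R * t → 0 < 1 + G R * t →
      ‖a R‖ ^ 2 * X R ^ (n - 1) * deriv X R = ‖A₀ R‖ ^ 2 * R ^ (n - 1) := by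
    intro R hR hP hQ
    have hn0 : (n : ℝ) ≠ 0 := by
      have : n ≠ 0 := by omega
      exact_mod_cast this
    have hR0 : R ≠ 0 := hR.ne'
    have hFd : HasDerivAt F (((n : ℝ) * deriv v₀ R * (2 * R) - (n : ℝ) * v₀ R * (2 * 1))
        / (2 * R) ^ 2) R := by
      have h1 : F = fun R => (n : ℝ) * v₀ R / (2 * R) := funext hF
      rw [h1]
      exact ((hv R hR).hasDerivAt.const_mul (n : ℝ)).div
        ((hasDerivAt_id' R).const_mul 2) (by positivity)
    have hPd := (hFd.mul_const t).const_add 1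
    have hXd : HasDerivAt X ((1 + F R * t) ^ ((2:ℝ) / n) / (1 + F R * t) * (1 + G R * t)) R := by
      have h1 : X = fun R => R * (1 + F R * t) ^ ((2:ℝ) / n) := funext hX
      rw [h1]
      have h2 := (hasDerivAt_id' R).mul (hPd.rpow_const (p := (2:ℝ) / n) (Or.inl hP.ne'))
      refine h2.congr_deriv ?_
      rw [Real.rpow_sub_one hP.ne']
      have h3 : 1 + G R * t = (1 + F R * t) + t * (deriv v₀ R - v₀ R / R) := by
        rw [hF, hG]; field_simp; ring
      rw [h3]
      generalize (1 + F R * t) ^ ((2:ℝ) / n) = q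
      generalize 1 + F R * t = P at hP
      have := hP.ne'
      field_simp
    have hq : ((1 + F R * t) ^ ((2:ℝ) / n)) ^ (n - 1) * (1 + F R * t) ^ ((2:ℝ) / n)
        = (1 + F R * t) ^ 2 := by
      rw [← pow_succ, Nat.sub_add_cancel hn, ← Real.rpow_natCast, ← Real.rpow_mul hP.le,
        div_mul_cancel₀ _ hn0]
      exact_mod_cast Real.rpow_natCast (1 + F R * t) 2
    have hs : ∀ P : ℝ, 0 < P → (P ^ (-(1:ℝ) / 2)) ^ 2 = P⁻¹ := by
      intro P hP
      rw [← Real.rpow_natCast, ← Real.rpow_mul hP.le, ← Real.rpow_neg_one]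
      norm_num
    rw [hXd.deriv, ha, norm_mul, Complex.norm_real, mul_pow, Real.norm_eq_abs, sq_abs, mul_pow,
      hs _ hP, hs _ hQ, hX, mul_pow]
    generalize (1 + F R * t) ^ ((2:ℝ) / n) = q at hq
    generalize 1 + F R * t = P at hP hq
    generalize 1 + G R * t = Q at hQ
    have h4 := hP.ne'
    have h5 := hQ.ne'
    calc _ = ‖A₀ R‖ ^ 2 * R ^ (n - 1) * (q ^ (n - 1) * q) * (P⁻¹ * P⁻¹) * (Q⁻¹ * Q) := by ring
      _ = _ := by rw [hq]; field_simp
  refine ⟨key, fun h => setIntegral_congr_fun measurableSet_Ioi fun R hR => ?_⟩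
  exact key R hR (h R hR).1 (h R hR).2
end

section
/- Let k ≥ 1 be an integer, α > 0, and let f : (0,∞) → ℂ be k times continuously differentiable. Suppose f^{(j)}(r) → 0 as r → ∞ for every 0 ≤ j ≤ k−1, and that L := lim_{r→∞} r^{α+k} f^{(k)}(r) exists. Then for every 0 ≤ j ≤ k, the limit lim_{r→∞} r^{α+j} f^{(j)}(r) exists and equals (−1)^{k−j} · (Γ(α+j)/Γ(α+k)) · L, where Γ is the Gamma function. In particular, if L ≠ 0 then all these limits are nonzero. -/
open Filter

lemma step_real (β : ℝ) (hβ : 0 < β) (g g' : ℝ → ℝ)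
    (hg : ∀ x ∈ Set.Ioi (0:ℝ), HasDerivAt g (g' x) x) (h0 : Tendsto g atTop (nhds 0))
    (M : ℝ) (hM : Tendsto (fun r : ℝ => r ^ (β + 1) * g' r) atTop (nhds M)) :
    Tendsto (fun r : ℝ => r ^ β * g r) atTop (nhds (-M / β)) := by
  have key : Tendsto (fun x => g x / x ^ (-β)) atTop (nhds (-M / β)) := by
    refine HasDerivAt.lhopital_zero_atTop_on_Ioi (a := 0) (g' := fun x => -β * x ^ (-β - 1)) hg
      (fun x hx => Real.hasDerivAt_rpow_const (Or.inl (ne_of_gt hx))) ?_ h0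
      (tendsto_rpow_neg_atTop hβ) ?_
    · intro x hx
      have : 0 < x ^ (-β - 1) := Real.rpow_pos_of_pos hx _
      exact mul_ne_zero (by linarith) this.ne'
    · refine (hM.neg.div_const β).congr' ?_
      filter_upwards [eventually_gt_atTop 0] with x hx
      have h1 : x ^ (-β - 1) = (x ^ (β + 1))⁻¹ := by
        rw [← Real.rpow_neg hx.le]; congr 1; ring
      have : 0 < x ^ (β + 1) := Real.rpow_pos_of_pos hx _
      rw [h1]; field_simp
  refine key.congr' ?_
  filter_upwards [eventually_gt_atTop 0] with x hx
  rw [Real.rpow_neg hx.le, div_inv_eq_mul, mul_comm]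

lemma step_complex (β : ℝ) (hβ : 0 < β) (g g' : ℝ → ℂ)
    (hg : ∀ x ∈ Set.Ioi (0:ℝ), HasDerivAt g (g' x) x) (h0 : Tendsto g atTop (nhds 0))
    (M : ℂ) (hM : Tendsto (fun r : ℝ => ((r ^ (β + 1) : ℝ) : ℂ) * g' r) atTop (nhds M)) :
    Tendsto (fun r : ℝ => ((r ^ β : ℝ) : ℂ) * g r) atTop (nhds (-M / (β : ℂ))) := by
  have hre := step_real β hβ (fun x => (g x).re) (fun x => (g' x).re)
    (fun x hx => Complex.reCLM.hasFDerivAt.comp_hasDerivAt x (hg x hx))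
    (by simpa [Function.comp_def] using (Complex.continuous_re.tendsto _).comp h0) M.re
    (by simpa [Function.comp_def] using (Complex.continuous_re.tendsto _).comp hM)
  have him := step_real β hβ (fun x => (g x).im) (fun x => (g' x).im)
    (fun x hx => Complex.imCLM.hasFDerivAt.comp_hasDerivAt x (hg x hx))
    (by simpa [Function.comp_def] using (Complex.continuous_im.tendsto _).comp h0) M.im
    (by simpa [Function.comp_def] using (Complex.continuous_im.tendsto _).comp hM)
  have h2 := ((Complex.continuous_ofReal.tendsto _).comp hre).add
    (((Complex.continuous_ofReal.tendsto _).comp him).mul_const Complex.I)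
  refine (h2.congr fun r => ?_).trans (le_of_eq ?_)
  · apply Complex.ext <;> simp
  · congr 1
    apply Complex.ext <;> simp [← Complex.ofReal_neg, Complex.div_ofReal_re, Complex.div_ofReal_im]

/-- Iterated l'Hôpital-type lemma: if `f^{(j)}(r) → 0` as `r → ∞` for `0 ≤ j ≤ k-1` and
`r^{α+k} f^{(k)}(r) → L`, then for every `0 ≤ j ≤ k`,
`r^{α+j} f^{(j)}(r) → (-1)^{k-j} (Γ(α+j)/Γ(α+k)) L`, which is nonzero whenever `L ≠ 0`. -/
theorem stmt15 (k : ℕ) (hk : 1 ≤ k) (α : ℝ) (hα : 0 < α)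
    (f : ℝ → ℂ) (hf : ContDiffOn ℝ (k : ℕ∞) f (Set.Ioi 0))
    (hdecay : ∀ j ≤ k - 1, Tendsto (iteratedDeriv j f) atTop (nhds 0))
    (L : ℂ)
    (hL : Tendsto (fun r : ℝ => ((r ^ (α + (k : ℝ)) : ℝ) : ℂ) * iteratedDeriv k f r)
      atTop (nhds L)) :
    ∀ j ≤ k,
      Tendsto (fun r : ℝ => ((r ^ (α + (j : ℝ)) : ℝ) : ℂ) * iteratedDeriv j f r) atTop
        (nhds ((-1) ^ (k - j) *
          ((Real.Gamma (α + (j : ℝ)) / Real.Gamma (α + (k : ℝ)) : ℝ) : ℂ) * L)) ∧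
      (L ≠ 0 → (-1) ^ (k - j) *
          ((Real.Gamma (α + (j : ℝ)) / Real.Gamma (α + (k : ℝ)) : ℝ) : ℂ) * L ≠ 0) := by
  have hG : ∀ j : ℕ, 0 < Real.Gamma (α + (j : ℝ)) := fun j =>
    Real.Gamma_pos_of_pos (by positivity)
  have hderiv : ∀ j < k, ∀ x ∈ Set.Ioi (0:ℝ),
      HasDerivAt (iteratedDeriv j f) (iteratedDeriv (j + 1) f x) x := by
    intro j hj x hx
    have h1 := hf.differentiableOn_iteratedDerivWithin (m := j) (by exact_mod_cast hj)
      (uniqueDiffOn_Ioi 0)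
    have h2 := h1.congr (fun y hy => ((iteratedDerivWithin_of_isOpen isOpen_Ioi) hy).symm)
    rw [iteratedDeriv_succ]
    exact ((h2 x hx).differentiableAt (Ioi_mem_nhds hx)).hasDerivAt
  intro j hj
  refine ⟨?_, fun hL0 => mul_ne_zero (mul_ne_zero (pow_ne_zero _ (by simp)) ?_) hL0⟩
  · induction hj using Nat.decreasingInduction with
    | self =>
      simpa [div_self (hG k).ne'] using hL
    | of_succ j hj ih =>
      have hb : 0 < α + (j : ℝ) := by positivity
      have hs := step_complex (α + j) hb _ _ (hderiv j hj) (hdecay j (by omega)) _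
        (by simpa only [Nat.cast_add, Nat.cast_one, add_assoc] using ih)
      refine hs.trans (le_of_eq ?_)
      congr 1
      have e : k - j = (k - (j + 1)) + 1 := by omega
      have hb' : ((α + (j : ℝ) : ℝ) : ℂ) ≠ 0 := by exact_mod_cast hb.ne'
      rw [e, pow_succ, ← add_assoc, Real.Gamma_add_one hb.ne']
      rw [mul_div_assoc, Complex.ofReal_mul]
      field_simp
  · exact_mod_cast (div_pos (hG j) (hG k)).ne'
end

section
/- Let n ≥ 3, μ > 0, κ > 0, and let k ≥ 0 be an integer. Let A₀ ∈ C^k((0,∞); ℂ) be such that m₀(r) := ∫₀^r |A₀(s)|² s^{n−1} ds is finite for all r > 0, limsup_{r→0} |A₀^{(j)}(r)| / r^{κ−j} < ∞ for every 0 ≤ j ≤ k, and liminf_{r→0} |A₀(r)| / r^{κ} > 0. Define v₀(r) := √(2μ m₀(r)/((n−2) r^{n−2})). Then there exist ε > 0 and constants 0 < c ≤ C such that v₀ is (k+1)-times differentiable on (0,ε), c r^{κ+1} ≤ v₀(r) ≤ C r^{κ+1} for all r ∈ (0,ε), and for every 1 ≤ j ≤ k+1 one has limsup_{r→0} |v₀^{(j)}(r)|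 / r^{κ+1−j} < ∞. -/
open MeasureTheory Set Filter

/-- Symbol-type class near the origin. -/
def QQ : ℕ → ℝ → (ℝ → ℝ) → Prop
  | 0, a, f => ∃ C : ℝ, ∀ᶠ r in nhdsWithin 0 (Set.Ioi (0:ℝ)), |f r| ≤ C * r ^ a
  | (N+1), a, f => (∃ C : ℝ, ∀ᶠ r in nhdsWithin 0 (Set.Ioi (0:ℝ)), |f r| ≤ C * r ^ a) ∧
      (∀ᶠ r in nhdsWithin 0 (Set.Ioi (0:ℝ)), DifferentiableAt ℝ f r) ∧ QQ N (a-1) (deriv f)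

lemma ev_pos : ∀ᶠ r in nhdsWithin 0 (Set.Ioi (0:ℝ)), 0 < r := self_mem_nhdsWithin

lemma ev_ev {p : ℝ → Prop} (h : ∀ᶠ r in nhdsWithin 0 (Set.Ioi (0:ℝ)), p r) :
    ∀ᶠ r in nhdsWithin 0 (Set.Ioi (0:ℝ)), ∀ᶠ s in nhds r, p s := by
  filter_upwards [eventually_eventually_nhdsWithin.2 h, ev_pos] with r hr h0
  rwa [isOpen_Ioi.nhdsWithin_eq h0] at hr

lemma ev_deriv {f g : ℝ → ℝ} (h : f =ᶠ[nhdsWithin 0 (Set.Ioi (0:ℝ))] g) :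
    deriv f =ᶠ[nhdsWithin 0 (Set.Ioi (0:ℝ))] deriv g := by
  filter_upwards [ev_ev h] with r hr
  exact Filter.EventuallyEq.deriv_eq hr

lemma QQ.bound {N : ℕ} {a : ℝ} {f : ℝ → ℝ} (h : QQ N a f) :
    ∃ C : ℝ, ∀ᶠ r in nhdsWithin 0 (Set.Ioi (0:ℝ)), |f r| ≤ C * r ^ a := by
  cases N with
  | zero => exact h
  | succ N => exact h.1

lemma QQ.congr {N : ℕ} {a : ℝ} {f g : ℝ → ℝ} (h : QQ N a f)
    (e : f =ᶠ[nhdsWithin 0 (Set.Ioi (0:ℝ))] g) : QQ N a g := by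
  have hb : ∃ C : ℝ, ∀ᶠ r in nhdsWithin 0 (Set.Ioi (0:ℝ)), |g r| ≤ C * r ^ a := by
    obtain ⟨C, hC⟩ := h.bound
    refine ⟨C, ?_⟩
    filter_upwards [hC, e] with r h1 h2
    rwa [← h2]
  induction N generalizing a f g with
  | zero => exact hb
  | succ N ih =>
    have e' := ev_deriv e
    refine ⟨hb, ?_, ih h.2.2 e' ?_⟩
    · filter_upwards [h.2.1, ev_ev e] with r h1 h2
      exact h1.congr_of_eventuallyEq (Filter.EventuallyEq.symm h2)
    · obtain ⟨C, hC⟩ := h.2.2.bound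
      refine ⟨C, ?_⟩
      filter_upwards [hC, e'] with r h1 h2
      rwa [← h2]

lemma QQ.pred {N : ℕ} {a : ℝ} {f : ℝ → ℝ} (h : QQ (N+1) a f) : QQ N a f := by
  induction N generalizing a f with
  | zero => exact h.1
  | succ N ih => exact ⟨h.1, h.2.1, ih h.2.2⟩

lemma QQ.add {N : ℕ} {a : ℝ} {f g : ℝ → ℝ} (hf : QQ N a f) (hg : QQ N a g) :
    QQ N a (fun r => f r + g r) := by
  have hb : ∀ {f g : ℝ → ℝ} {a : ℝ} {N : ℕ}, QQ N a f → QQ N a g →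
      ∃ C : ℝ, ∀ᶠ r in nhdsWithin 0 (Set.Ioi (0:ℝ)), |f r + g r| ≤ C * r ^ a := by
    intro f g a N hf hg
    obtain ⟨C, hC⟩ := hf.bound
    obtain ⟨D, hD⟩ := hg.bound
    refine ⟨C + D, ?_⟩
    filter_upwards [hC, hD] with r h1 h2
    have := abs_add_le (f r) (g r)
    rw [add_mul]; linarith
  induction N generalizing a f g with
  | zero => exact hb hf hg
  | succ N ih =>
    refine ⟨hb hf hg, ?_, (ih hf.2.2 hg.2.2).congr ?_⟩
    · filter_upwards [hf.2.1, hg.2.1] with r h1 h2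
      exact h1.add h2
    · filter_upwards [hf.2.1, hg.2.1] with r h1 h2
      exact (h1.hasDerivAt.add h2.hasDerivAt).deriv.symm

lemma QQ.mul {N : ℕ} {a b : ℝ} {f g : ℝ → ℝ} (hf : QQ N a f) (hg : QQ N b g) :
    QQ N (a + b) (fun r => f r * g r) := by
  have hb : ∀ {f g : ℝ → ℝ} {a b : ℝ} {N : ℕ}, QQ N a f → QQ N b g →
      ∃ C : ℝ, ∀ᶠ r in nhdsWithin 0 (Set.Ioi (0:ℝ)), |f r * g r| ≤ C * r ^ (a + b) := by
    intro f g a b N hf hg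
    obtain ⟨C, hC⟩ := hf.bound
    obtain ⟨D, hD⟩ := hg.bound
    refine ⟨C * D, ?_⟩
    filter_upwards [hC, hD, ev_pos] with r h1 h2 h0
    rw [abs_mul, Real.rpow_add h0]
    calc |f r| * |g r| ≤ (C * r ^ a) * (D * r ^ b) :=
          mul_le_mul h1 h2 (abs_nonneg _) ((abs_nonneg _).trans h1)
      _ = _ := by ring
  induction N generalizing a b f g with
  | zero => exact hb hf hg
  | succ N ih =>
    have h1 := ih hf.2.2 hg.pred
    have h2 := ih hf.pred hg.2.2
    rw [show a - 1 + b = a + b - 1 by ring] at h1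
    rw [show a + (b - 1) = a + b - 1 by ring] at h2
    refine ⟨hb hf hg, ?_, (h1.add h2).congr ?_⟩
    · filter_upwards [hf.2.1, hg.2.1] with r h1 h2
      exact h1.mul h2
    · filter_upwards [hf.2.1, hg.2.1] with r h1 h2
      exact (h1.hasDerivAt.mul h2.hasDerivAt).deriv.symm

lemma QQ.const (N : ℕ) (c : ℝ) : QQ N 0 (fun _ => c) := by
  have h0 : ∀ (N : ℕ) (a : ℝ), QQ N a (fun _ => 0) := by
    intro N
    induction N with
    | zero => intro a; exact ⟨0, by simp⟩
    | succ N ih => intro a; exact ⟨⟨0, by simp⟩, by simp, by simpa using ih _⟩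
  have hb : ∃ C : ℝ, ∀ᶠ r in nhdsWithin 0 (Set.Ioi (0:ℝ)), |c| ≤ C * r ^ (0:ℝ) :=
    ⟨|c|, by simp⟩
  cases N with
  | zero => exact hb
  | succ N => exact ⟨hb, by simp, by simpa using h0 _ _⟩

lemma QQ.cmul {N : ℕ} {a : ℝ} {f : ℝ → ℝ} (c : ℝ) (hf : QQ N a f) :
    QQ N a (fun r => c * f r) := by
  simpa using (QQ.const N c).mul hf

lemma QQ.rpow (N : ℕ) (p : ℝ) : QQ N p (fun r => r ^ p) := by
  have hb : ∀ p : ℝ, ∃ C : ℝ, ∀ᶠ r in nhdsWithin 0 (Set.Ioi (0:ℝ)), |r ^ p| ≤ C * r ^ p := by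
    intro p
    refine ⟨1, ?_⟩
    filter_upwards [ev_pos] with r h0
    rw [abs_of_pos (Real.rpow_pos_of_pos h0 p), one_mul]
  induction N generalizing p with
  | zero => exact hb p
  | succ N ih =>
    refine ⟨hb p, ?_, ((ih (p-1)).cmul p).congr ?_⟩
    · filter_upwards [ev_pos] with r h0
      exact (Real.hasDerivAt_rpow_const (Or.inl h0.ne')).differentiableAt
    · filter_upwards [ev_pos] with r h0
      exact (Real.hasDerivAt_rpow_const (Or.inl h0.ne')).deriv.symm

lemma QQ.comp_rpow {N : ℕ} {a : ℝ} {f : ℝ → ℝ} (p : ℝ) (hf : QQ N a f) {c : ℝ} (hc : 0 < c)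
    (hl : ∀ᶠ r in nhdsWithin 0 (Set.Ioi (0:ℝ)), c * r ^ a ≤ f r) :
    QQ N (a * p) (fun r => f r ^ p) := by
  have hb : ∀ p : ℝ, ∃ C : ℝ, ∀ᶠ r in nhdsWithin 0 (Set.Ioi (0:ℝ)),
      |f r ^ p| ≤ C * r ^ (a * p) := by
    intro p
    obtain ⟨C, hC⟩ := hf.bound
    refine ⟨max (c ^ p) (C ^ p), ?_⟩
    filter_upwards [hC, hl, ev_pos] with r h1 h2 h0
    have hr : 0 < r ^ a := Real.rpow_pos_of_pos h0 a
    have hcr : 0 < c * r ^ a := mul_pos hc hr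
    have hfp : 0 < f r := hcr.trans_le h2
    rw [abs_of_pos hfp] at h1
    have hCp : 0 < C := by
      by_contra hneg
      have := mul_nonpos_of_nonpos_of_nonneg (not_lt.1 hneg) hr.le
      linarith
    rw [abs_of_pos (Real.rpow_pos_of_pos hfp p), Real.rpow_mul h0.le]
    have hrp : 0 ≤ (r ^ a) ^ p := Real.rpow_nonneg hr.le p
    rcases le_total 0 p with hp | hp
    · calc f r ^ p ≤ (C * r ^ a) ^ p := Real.rpow_le_rpow hfp.le h1 hp
        _ = C ^ p * (r ^ a) ^ p := Real.mul_rpow hCp.le hr.le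
        _ ≤ _ := mul_le_mul_of_nonneg_right (le_max_right _ _) hrp
    · calc f r ^ p ≤ (c * r ^ a) ^ p := Real.rpow_le_rpow_of_nonpos hcr h2 hp
        _ = c ^ p * (r ^ a) ^ p := Real.mul_rpow hc.le hr.le
        _ ≤ _ := mul_le_mul_of_nonneg_right (le_max_left _ _) hrp
  have hpos : ∀ᶠ r in nhdsWithin 0 (Set.Ioi (0:ℝ)), 0 < f r := by
    filter_upwards [hl, ev_pos] with r h2 h0
    exact (mul_pos hc (Real.rpow_pos_of_pos h0 a)).trans_le h2
  induction N generalizing p with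
  | zero => exact hb p
  | succ N ih =>
    have h1 := (hf.2.2.mul (ih (p-1) hf.pred)).cmul p
    rw [show a - 1 + a * (p-1) = a * p - 1 by ring] at h1
    refine ⟨hb p, ?_, h1.congr ?_⟩
    · filter_upwards [hf.2.1, hpos] with r h1 h0
      exact (h1.hasDerivAt.rpow_const (Or.inl h0.ne')).differentiableAt
    · filter_upwards [hf.2.1, hpos] with r h1 h0
      rw [(h1.hasDerivAt.rpow_const (Or.inl h0.ne')).deriv]
      ring

lemma QQ.iter {N : ℕ} {a : ℝ} {f : ℝ → ℝ} (hf : QQ N a f) :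
    (∀ j ≤ N, ∃ C : ℝ, ∀ᶠ r in nhdsWithin 0 (Set.Ioi (0:ℝ)),
      |iteratedDeriv j f r| ≤ C * r ^ (a - (j:ℝ))) ∧
    (∀ j < N, ∀ᶠ r in nhdsWithin 0 (Set.Ioi (0:ℝ)),
      DifferentiableAt ℝ (iteratedDeriv j f) r) := by
  induction N generalizing a f with
  | zero =>
    refine ⟨?_, by simp⟩
    intro j hj
    obtain rfl : j = 0 := by omega
    simpa using hf.bound
  | succ N ih =>
    obtain ⟨i1, i2⟩ := ih hf.2.2
    constructor
    · intro j hj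
      cases j with
      | zero => simpa using hf.bound
      | succ j =>
        obtain ⟨C, hC⟩ := i1 j (by omega)
        refine ⟨C, ?_⟩
        rw [iteratedDeriv_succ']
        rw [show a - 1 - (j:ℝ) = a - ((j+1 : ℕ):ℝ) by push_cast; ring] at hC
        exact hC
    · intro j hj
      cases j with
      | zero => simpa using hf.2.1
      | succ j =>
        rw [iteratedDeriv_succ']
        exact i2 j (by omega)

lemma QQ.of_complex (L : ℂ →L[ℝ] ℝ) (hL : ∀ z, |L z| ≤ ‖z‖) {N : ℕ} {a : ℝ} {A : ℝ → ℂ}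
    (h1 : ∀ j ≤ N, ∃ C : ℝ, ∀ᶠ r in nhdsWithin 0 (Set.Ioi (0:ℝ)),
      ‖iteratedDeriv j A r‖ ≤ C * r ^ (a - (j:ℝ)))
    (h2 : ∀ j < N, ∀ᶠ r in nhdsWithin 0 (Set.Ioi (0:ℝ)),
      DifferentiableAt ℝ (iteratedDeriv j A) r) : QQ N a (fun r => L (A r)) := by
  have hb : ∃ C : ℝ, ∀ᶠ r in nhdsWithin 0 (Set.Ioi (0:ℝ)), |L (A r)| ≤ C * r ^ a := by
    obtain ⟨C, hC⟩ := h1 0 (by omega)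
    refine ⟨C, ?_⟩
    filter_upwards [hC] with r hr
    simp at hr
    exact (hL _).trans hr
  induction N generalizing a A with
  | zero => exact hb
  | succ N ih =>
    have hd : ∀ᶠ r in nhdsWithin 0 (Set.Ioi (0:ℝ)), DifferentiableAt ℝ A r := by
      simpa using h2 0 (by omega)
    have h1' : ∀ j ≤ N, ∃ C : ℝ, ∀ᶠ r in nhdsWithin 0 (Set.Ioi (0:ℝ)),
      ‖iteratedDeriv j (deriv A) r‖ ≤ C * r ^ (a - 1 - (j:ℝ)) := by
      intro j hj
      obtain ⟨C, hC⟩ := h1 (j+1) (by omega)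
      refine ⟨C, ?_⟩
      rw [iteratedDeriv_succ'] at hC
      rw [show a - 1 - (j:ℝ) = a - ((j+1 : ℕ):ℝ) by push_cast; ring]
      exact hC
    refine ⟨hb, ?_, (ih (A := deriv A) (a := a - 1) h1' ?_ ?_).congr ?_⟩
    · filter_upwards [hd] with r hr
      exact (L.hasFDerivAt.comp_hasDerivAt r hr.hasDerivAt).differentiableAt
    · intro j hj
      have := h2 (j+1) (by omega)
      rwa [iteratedDeriv_succ'] at this
    · obtain ⟨C, hC⟩ := h1' 0 (by omega)
      refine ⟨C, ?_⟩
      filter_upwards [hC] with r hr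
      simp at hr
      exact (hL _).trans hr
    · filter_upwards [hd] with r hr
      exact (L.hasFDerivAt.comp_hasDerivAt r hr.hasDerivAt).deriv.symm

/-- Vanishing rates near the origin: if `A₀` is `C^k` on `(0,∞)` with
`|A₀^{(j)}(r)| ≲ r^{κ-j}` and `|A₀(r)| ≳ r^κ` as `r → 0`, then the special initial velocity
`v₀(r) = √(2μ m₀(r)/((n-2) r^{n-2}))` is `(k+1)`-times differentiable near `0`, is comparable
to `r^{κ+1}` there, and satisfies `|v₀^{(j)}(r)| ≲ r^{κ+1-j}` for `1 ≤ j ≤ k+1`. -/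
theorem stmt18 (n : ℕ) (hn : 3 ≤ n) (μ : ℝ) (hμ : 0 < μ) (κ : ℝ) (hκ : 0 < κ)
    (k : ℕ) (A₀ : ℝ → ℂ) (hA : ContDiffOn ℝ (k : ℕ∞) A₀ (Set.Ioi 0))
    (hint : ∀ r > (0:ℝ), IntervalIntegrable (fun s => ‖A₀ s‖ ^ 2 * s ^ (n - 1)) volume 0 r)
    (hup : ∀ j ≤ k, ∃ C : ℝ, ∀ᶠ r in nhdsWithin 0 (Set.Ioi 0),
        ‖iteratedDeriv j A₀ r‖ ≤ C * r ^ (κ - (j : ℝ)))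
    (hlow : ∃ c > (0:ℝ), ∀ᶠ r in nhdsWithin 0 (Set.Ioi 0), c * r ^ κ ≤ ‖A₀ r‖)
    (m₀ v₀ : ℝ → ℝ)
    (hm : ∀ r, m₀ r = ∫ s in (0:ℝ)..r, ‖A₀ s‖ ^ 2 * s ^ (n - 1))
    (hv : ∀ r, v₀ r = Real.sqrt (2 * μ * m₀ r / (((n : ℝ) - 2) * r ^ (n - 2)))) :
    ∃ ε > (0:ℝ), ∃ c C : ℝ, 0 < c ∧ c ≤ C ∧
      (∀ r ∈ Set.Ioo (0:ℝ) ε, ∀ j ≤ k, DifferentiableAt ℝ (iteratedDeriv j v₀) r) ∧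
      (∀ r ∈ Set.Ioo (0:ℝ) ε, c * r ^ (κ + 1) ≤ v₀ r ∧ v₀ r ≤ C * r ^ (κ + 1)) ∧
      (∀ j : ℕ, 1 ≤ j → j ≤ k + 1 → ∃ C' : ℝ, ∀ᶠ r in nhdsWithin 0 (Set.Ioi 0),
        |iteratedDeriv j v₀ r| ≤ C' * r ^ (κ + 1 - (j : ℝ))) := by
  have hnR : (3:ℝ) ≤ n := by exact_mod_cast hn
  -- differentiability of the amplitude
  have hA2 : ∀ j < k, ∀ᶠ r in nhdsWithin 0 (Set.Ioi (0:ℝ)),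
      DifferentiableAt ℝ (iteratedDeriv j A₀) r := by
    intro j hj
    filter_upwards [ev_pos] with r h0
    have hd := (hA.differentiableOn_iteratedDerivWithin (m := j) (by exact_mod_cast hj)
      isOpen_Ioi.uniqueDiffOn).differentiableAt (Ioi_mem_nhds h0)
    refine hd.congr_of_eventuallyEq ?_
    filter_upwards [Ioi_mem_nhds h0] with x hx
    exact (iteratedDerivWithin_of_isOpen isOpen_Ioi hx).symm
  have hre : QQ k κ (fun r => Complex.reCLM (A₀ r)) :=
    QQ.of_complex Complex.reCLM (fun z => by simpa using Complex.abs_re_le_norm z) hup hA2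
  have him : QQ k κ (fun r => Complex.imCLM (A₀ r)) :=
    QQ.of_complex Complex.imCLM (fun z => by simpa using Complex.abs_im_le_norm z) hup hA2
  set F : ℝ → ℝ := fun s => ‖A₀ s‖ ^ 2 * s ^ (n - 1) with hF
  have hcast : ((n - 1 : ℕ) : ℝ) = (n:ℝ) - 1 := by
    rw [Nat.cast_sub (by omega)]; simp
  have hcast2 : ((n - 2 : ℕ) : ℝ) = (n:ℝ) - 2 := by
    rw [Nat.cast_sub (by omega)]; simp
  have hFQ : QQ k (2 * κ + n - 1) F := by
    have h := ((hre.mul hre).add (him.mul him)).mul (QQ.rpow k ((n:ℝ) - 1))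
    rw [show κ + κ + ((n:ℝ) - 1) = 2 * κ + n - 1 by ring] at h
    refine h.congr ?_
    filter_upwards [ev_pos] with r h0
    simp only [hF, Complex.reCLM_apply, Complex.imCLM_apply]
    rw [← hcast, Real.rpow_natCast, ← Complex.normSq_eq_norm_sq, Complex.normSq_apply]
  have hFc : ContinuousOn F (Set.Ioi 0) := by
    have := hA.continuousOn
    fun_prop
  have hmd : ∀ r > (0:ℝ), HasDerivAt m₀ (F r) r := by
    intro r hr
    have : m₀ = fun u => ∫ s in (0:ℝ)..u, F s := funext hm
    rw [this]
    exact intervalIntegral.integral_hasDerivAt_right (hint r hr)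
      (hFc.stronglyMeasurableAtFilter isOpen_Ioi r hr) (hFc.continuousAt (Ioi_mem_nhds hr))
  set q : ℝ := 2 * κ + n - 1 with hq
  have hq0 : 0 < q := by rw [hq]; linarith
  obtain ⟨c, hc, hlow⟩ := hlow
  obtain ⟨D, hD⟩ := hFQ.bound
  have hFl : ∀ᶠ r in nhdsWithin 0 (Set.Ioi (0:ℝ)), c ^ 2 * r ^ q ≤ F r := by
    filter_upwards [hlow, ev_pos] with r h1 h0
    have hr : 0 ≤ r ^ κ := Real.rpow_nonneg h0.le κ
    have e : r ^ q = (r ^ κ) ^ 2 * r ^ (n-1) := by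
      rw [← Real.rpow_natCast r (n-1), hcast, ← Real.rpow_mul_natCast h0.le, ← Real.rpow_add h0]
      congr 1
      rw [hq]; push_cast; ring
    rw [e, ← mul_assoc, ← mul_pow]
    simp only [hF]
    gcongr
  have hint2 : ∀ r : ℝ, ∫ s in (0:ℝ)..r, s ^ q = r ^ (q+1) / (q+1) := by
    intro r
    rw [integral_rpow (Or.inl (by linarith)), Real.zero_rpow (by linarith)]
    simp
  have hpowint : ∀ (C r : ℝ), IntervalIntegrable (fun s : ℝ => C * s ^ q) volume 0 r := by
    intro C r
    exact (intervalIntegral.intervalIntegrable_rpow' (by linarith)).const_mul C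
  have hbd : ∀ᶠ r in nhdsWithin 0 (Set.Ioi (0:ℝ)),
      c ^ 2 / (q+1) * r ^ (q+1) ≤ m₀ r ∧ m₀ r ≤ D / (q+1) * r ^ (q+1) := by
    obtain ⟨ε, hε, hsub⟩ := mem_nhdsGT_iff_exists_Ioo_subset.1 (hFl.and hD)
    filter_upwards [Ioo_mem_nhdsGT hε] with r hr
    have hI : ∀ C : ℝ, ∫ s in (0:ℝ)..r, C * s ^ q = C / (q+1) * r ^ (q+1) := by
      intro C
      rw [intervalIntegral.integral_const_mul, hint2]; ring
    rw [hm, ← hI, ← hI]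
    constructor
    · refine intervalIntegral.integral_mono_on_of_le_Ioo hr.1.le (hpowint _ r) (hint r hr.1) ?_
      intro x hx
      exact (hsub ⟨hx.1, hx.2.trans hr.2⟩).1
    · refine intervalIntegral.integral_mono_on_of_le_Ioo hr.1.le (hint r hr.1) (hpowint _ r) ?_
      intro x hx
      exact (le_abs_self _).trans (hsub ⟨hx.1, hx.2.trans hr.2⟩).2
  have hmQ : QQ (k+1) (q+1) m₀ := by
    refine ⟨⟨D / (q+1), ?_⟩, ?_, ?_⟩
    · filter_upwards [hbd, ev_pos] with r h1 h0
      have : 0 ≤ c ^ 2 / (q+1) * r ^ (q+1) := by positivity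
      rw [abs_of_nonneg (this.trans h1.1)]
      exact h1.2
    · filter_upwards [ev_pos] with r h0
      exact (hmd r h0).differentiableAt
    · rw [add_sub_cancel_right]
      refine hFQ.congr ?_
      filter_upwards [ev_pos] with r h0
      exact (hmd r h0).deriv.symm
  set b : ℝ := 2 * μ / ((n:ℝ) - 2) with hb
  have hb0 : 0 < b := div_pos (by linarith) (by linarith)
  have hgQ : QQ (k+1) (2 * κ + 2) (fun r => b * (m₀ r * r ^ (-((n:ℝ)-2)))) := by
    have := (hmQ.mul (QQ.rpow (k+1) (-((n:ℝ)-2)))).cmul b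
    rwa [show q + 1 + -((n:ℝ)-2) = 2 * κ + 2 by rw [hq]; ring] at this
  have hgl : ∀ᶠ r in nhdsWithin 0 (Set.Ioi (0:ℝ)),
      (b * (c ^ 2 / (q+1))) * r ^ (2 * κ + 2) ≤ b * (m₀ r * r ^ (-((n:ℝ)-2))) := by
    filter_upwards [hbd, ev_pos] with r h1 h0
    rw [show 2 * κ + 2 = q + 1 + -((n:ℝ)-2) by rw [hq]; ring, Real.rpow_add h0, mul_assoc,
      ← mul_assoc (c ^ 2 / (q+1))]
    have := Real.rpow_nonneg h0.le (-((n:ℝ)-2))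
    gcongr
    exact h1.1
  have hc1 : 0 < b * (c ^ 2 / (q+1)) := by positivity
  have hve : ∀ᶠ r in nhdsWithin 0 (Set.Ioi (0:ℝ)),
      (b * (m₀ r * r ^ (-((n:ℝ)-2)))) ^ ((1:ℝ)/2) = v₀ r := by
    filter_upwards [ev_pos] with r h0
    rw [hv, Real.sqrt_eq_rpow, ← hcast2, Real.rpow_neg h0.le, Real.rpow_natCast, hb, hcast2]
    congr 1
    have : (n:ℝ) - 2 ≠ 0 := by linarith
    field_simp
  have hvQ : QQ (k+1) (κ + 1) v₀ := by
    have := (hgQ.comp_rpow (1/2) hc1 hgl).congr hve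
    rwa [show (2 * κ + 2) * (1/2) = κ + 1 by ring] at this
  obtain ⟨C, hC⟩ := hvQ.bound
  have hvl : ∀ᶠ r in nhdsWithin 0 (Set.Ioi (0:ℝ)),
      (b * (c ^ 2 / (q+1))) ^ ((1:ℝ)/2) * r ^ (κ + 1) ≤ v₀ r := by
    filter_upwards [hgl, hve, ev_pos] with r h1 h2 h0
    rw [← h2]
    have e : r ^ (κ + 1) = (r ^ (2 * κ + 2)) ^ ((1:ℝ)/2) := by
      rw [← Real.rpow_mul h0.le]; congr 1; ring
    rw [e, ← Real.mul_rpow hc1.le (Real.rpow_nonneg h0.le _)]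
    exact Real.rpow_le_rpow (mul_nonneg hc1.le (Real.rpow_nonneg h0.le _)) h1 (by norm_num)
  obtain ⟨hi1, hi2⟩ := hvQ.iter
  have hall : ∀ᶠ r in nhdsWithin 0 (Set.Ioi (0:ℝ)), ∀ j ∈ Set.Iic k,
      DifferentiableAt ℝ (iteratedDeriv j v₀) r := by
    rw [Filter.eventually_all_finite (Set.finite_Iic k)]
    intro j hj
    exact hi2 j (Nat.lt_succ_of_le hj)
  obtain ⟨ε, hε, hsub⟩ := mem_nhdsGT_iff_exists_Ioo_subset.1 (hall.and (hvl.and hC))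
  refine ⟨ε, hε, (b * (c ^ 2 / (q+1))) ^ ((1:ℝ)/2), max ((b * (c ^ 2 / (q+1))) ^ ((1:ℝ)/2)) C,
    Real.rpow_pos_of_pos hc1 _, le_max_left _ _, ?_, ?_, ?_⟩
  · intro r hr j hj
    exact (hsub hr).1 j hj
  · intro r hr
    refine ⟨(hsub hr).2.1, (le_abs_self _).trans ((hsub hr).2.2.trans ?_)⟩
    exact mul_le_mul_of_nonneg_right (le_max_right _ _) (Real.rpow_nonneg hr.1.le _)
  · intro j _ hj
    exact hi1 j hj
end

section
/- Let n ≥ 3 and μ > 0. Let A₀ : [0,∞) → ℂ be continuous, not identically zero, with ∫₀^∞ |A₀(s)|² s^{n−1} ds < ∞. Define m₀(r) := ∫₀^r |A₀(s)|² s^{n−1} ds, v₀(r) := √(2μ m₀(r)/((n−2) r^{n−2})) for r > 0, and Φ₀(r) := ∫₀^r v₀(s) ds. Then Φ₀ is bounded on [0,∞) if and only if n ≥ 5. -/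
open MeasureTheory Set

/-- The special initial phase `Φ₀(r) = ∫₀^r √(2μ m₀(s)/((n-2) s^{n-2})) ds` of the WKB data
for the focusing Schrödinger–Poisson system, built from a continuous, square-integrable
(with weight `s^{n-1}`), not identically vanishing amplitude `A₀`, is bounded on `[0,∞)`
if and only if `n ≥ 5`. -/
theorem stmt19 (n : ℕ) (hn : 3 ≤ n) (μ : ℝ) (hμ : 0 < μ)
    (A₀ : ℝ → ℂ) (hcont : ContinuousOn A₀ (Set.Ici 0))
    (hne : ∃ r ≥ (0:ℝ), A₀ r ≠ 0)
    (hint : IntegrableOn (fun s => ‖A₀ s‖ ^ 2 * s ^ (n - 1)) (Set.Ioi 0))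
    (m₀ v₀ Φ₀ : ℝ → ℝ)
    (hm : ∀ r, m₀ r = ∫ s in (0:ℝ)..r, ‖A₀ s‖ ^ 2 * s ^ (n - 1))
    (hv : ∀ r > (0:ℝ), v₀ r = Real.sqrt (2 * μ * m₀ r / (((n : ℝ) - 2) * r ^ (n - 2))))
    (hΦ : ∀ r, Φ₀ r = ∫ s in (0:ℝ)..r, v₀ s) :
    (∃ C : ℝ, ∀ r ≥ (0:ℝ), |Φ₀ r| ≤ C) ↔ 5 ≤ n := by
  set f : ℝ → ℝ := fun s => ‖A₀ s‖ ^ 2 * s ^ (n - 1) with hf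
  have hfc : ContinuousOn f (Ici 0) := (hcont.norm.pow 2).mul (continuous_pow _).continuousOn
  have hf0 : ∀ s, 0 ≤ s → 0 ≤ f s := fun s hs => by positivity
  have hfi : ∀ a b, 0 ≤ a → 0 ≤ b → IntervalIntegrable f volume a b := by
    intro a b ha hb
    apply ContinuousOn.intervalIntegrable
    apply hfc.mono
    intro x hx
    have := hx.1
    exact le_trans (le_min ha hb) this
  have hmono : ∀ a b, 0 ≤ a → a ≤ b → m₀ a ≤ m₀ b := by
    intro a b ha hab
    rw [hm, hm, ← intervalIntegral.integral_add_adjacent_intervals (hfi 0 a le_rfl ha)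
      (hfi a b ha (ha.trans hab))]
    have : 0 ≤ ∫ s in a..b, f s :=
      intervalIntegral.integral_nonneg hab (fun u hu => hf0 u (ha.trans hu.1))
    linarith
  have hm00 : m₀ 0 = 0 := by rw [hm]; simp
  have hm0 : ∀ r, 0 ≤ r → 0 ≤ m₀ r := fun r hr => hm00 ▸ hmono 0 r le_rfl hr
  set M := ∫ s in Ioi (0:ℝ), f s with hM
  have hmM : ∀ r, 0 ≤ r → m₀ r ≤ M := by
    intro r hr
    rw [hm, intervalIntegral.integral_of_le hr]
    apply setIntegral_mono_set hint
    · filter_upwards [ae_restrict_mem measurableSet_Ioi] with x hx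
      exact hf0 x (le_of_lt hx)
    · exact (Ioc_subset_Ioi_self).eventuallyLE
  have hM0 : 0 ≤ M := (hm0 0 le_rfl).trans (hmM 0 le_rfl)
  have hn2 : (1:ℝ) ≤ (n:ℝ) - 2 := by
    have : (3:ℝ) ≤ n := by exact_mod_cast hn
    linarith
  have hv0 : ∀ r > (0:ℝ), 0 ≤ v₀ r := fun r hr => by rw [hv r hr]; positivity
  -- bound near zero
  obtain ⟨B, hB⟩ := isCompact_Icc.exists_bound_of_continuousOn
    (hcont.mono (Icc_subset_Ici_self : Icc (0:ℝ) 1 ⊆ Ici 0))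
  have hmB : ∀ r, 0 < r → r ≤ 1 → m₀ r ≤ B ^ 2 * r ^ (n - 2) := by
    intro r hr hr1
    have h1 : m₀ r ≤ ∫ s in (0:ℝ)..r, B ^ 2 * r ^ (n - 2) := by
      rw [hm]
      apply intervalIntegral.integral_mono_on hr.le (hfi 0 r le_rfl hr.le) (by simp)
      intro x hx
      have h2 := hB x ⟨hx.1, hx.2.trans hr1⟩
      have h3 : x ^ (n - 1) ≤ r ^ (n - 2) := by
        calc x ^ (n - 1) ≤ r ^ (n - 1) := pow_le_pow_left₀ hx.1 hx.2 _
          _ ≤ r ^ (n - 2) := pow_le_pow_of_le_one hr.le hr1 (by omega)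
      have h4 : ‖A₀ x‖ ^ 2 ≤ B ^ 2 := pow_le_pow_left₀ (norm_nonneg _) h2 _
      exact mul_le_mul h4 h3 (pow_nonneg hx.1 _) (sq_nonneg _)
    rw [intervalIntegral.integral_const, sub_zero, smul_eq_mul] at h1
    have : 0 ≤ B ^ 2 * r ^ (n - 2) := by positivity
    nlinarith
  have hvB : ∀ r, 0 < r → r ≤ 1 → v₀ r ≤ Real.sqrt (2 * μ * B ^ 2) := by
    intro r hr hr1
    rw [hv r hr]
    apply Real.sqrt_le_sqrt
    have hp : 0 < r ^ (n - 2) := by positivity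
    rw [div_le_iff₀ (by positivity)]
    have h1 := hmB r hr hr1
    have h2 : 2 * μ * m₀ r ≤ 2 * μ * (B ^ 2 * r ^ (n - 2)) := by gcongr
    have h3 : 0 ≤ 2 * μ * (B ^ 2 * r ^ (n - 2)) := by positivity
    nlinarith
  have hvM : ∀ r, 1 ≤ r → v₀ r ≤ Real.sqrt (2 * μ * M) := by
    intro r hr
    rw [hv r (by linarith)]
    apply Real.sqrt_le_sqrt
    have hp : 1 ≤ r ^ (n - 2) := one_le_pow₀ hr
    have h1 := hmM r (by linarith)
    calc _ ≤ 2 * μ * m₀ r := div_le_self (by have := hm0 r (by linarith); positivity) (by nlinarith)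
      _ ≤ _ := by gcongr
  have hvmeas : AEStronglyMeasurable v₀ (volume.restrict (Ioi 0)) := by
    have hmm : AEMeasurable m₀ (volume.restrict (Ioi 0)) :=
      aemeasurable_restrict_of_monotoneOn measurableSet_Ioi
        (fun a ha b _ hab => hmono a b (le_of_lt ha) hab)
    have h2 : AEMeasurable (fun r => Real.sqrt (2 * μ * m₀ r / (((n : ℝ) - 2) * r ^ (n - 2))))
        (volume.restrict (Ioi 0)) := by
      apply Real.continuous_sqrt.measurable.comp_aemeasurable
      exact (hmm.const_mul _).div (by fun_prop)
    refine (h2.congr ?_).aestronglyMeasurable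
    filter_upwards [ae_restrict_mem measurableSet_Ioi] with x hx
    exact (hv x hx).symm
  have hvloc : ∀ a b, 0 ≤ a → IntegrableOn v₀ (Ioc a b) := by
    intro a b ha
    have hsub : Ioc a b ⊆ Ioi 0 := fun x hx => lt_of_le_of_lt ha hx.1
    apply Integrable.mono' (integrable_const (max (Real.sqrt (2 * μ * B ^ 2)) (Real.sqrt (2 * μ * M))))
      (hvmeas.mono_set hsub)
    filter_upwards [ae_restrict_mem measurableSet_Ioc] with x hx
    have hx0 : 0 < x := hsub hx
    rw [Real.norm_of_nonneg (hv0 x hx0)]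
    rcases le_total x 1 with h | h
    · exact (hvB x hx0 h).trans (le_max_left _ _)
    · exact (hvM x h).trans (le_max_right _ _)
  constructor
  · rintro ⟨C, hC⟩
    by_contra hlt
    obtain ⟨r, hr, hAr⟩ := hne
    obtain ⟨q, hq, hAq⟩ : ∃ q, r < q ∧ A₀ q ≠ 0 := by
      have h1 := (hcont r hr).mono (fun x (hx : x ∈ Ioi r) => hr.le.trans (le_of_lt hx))
      have h2 := (h1.eventually_ne hAr).and self_mem_nhdsWithin
      obtain ⟨q, h3, h4⟩ := h2.exists
      exact ⟨q, h4, h3⟩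
    have hq0 : 0 < q := lt_of_le_of_lt hr hq
    set R := q + 1 with hR
    have hR1 : 1 ≤ R := by linarith
    have hc : 0 < m₀ R := by
      rw [hm]
      apply intervalIntegral.integral_pos (by linarith) (hfc.mono Icc_subset_Ici_self)
        (fun x hx => hf0 x hx.1.le)
      exact ⟨q, ⟨hq0.le, by linarith⟩, by have := norm_pos_iff.2 hAq; positivity⟩
    set k := Real.sqrt (2 * μ * m₀ R / ((n:ℝ) - 2)) with hk
    have hkpos : 0 < k := Real.sqrt_pos.2 (by positivity)
    have hlow : ∀ s, R ≤ s → k * s⁻¹ ≤ v₀ s := by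
      intro s hs
      have hs0 : 0 < s := by linarith
      rw [hv s hs0]
      apply Real.le_sqrt_of_sq_le
      rw [mul_pow, hk, Real.sq_sqrt (by positivity)]
      have h1 : s ^ (n - 2) ≤ s ^ 2 := pow_le_pow_right₀ (by linarith) (by omega)
      have h2 := hmono R s (by linarith) hs
      rw [inv_pow, ← div_eq_mul_inv, div_div]
      have h3 := hm0 s hs0.le
      have h4 : 0 ≤ 2 * μ * m₀ s := by positivity
      gcongr
    have hint' : IntegrableOn v₀ (Ioi R) := by
      apply integrableOn_Ioi_of_intervalIntegral_norm_bounded (ι := ℝ) (l := Filter.atTop) (b := id)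
        C R (fun i => hvloc R i (by linarith)) Filter.tendsto_id
      filter_upwards [Filter.eventually_ge_atTop R] with i hi
      have h1 : ∫ x in R..i, ‖v₀ x‖ = ∫ x in R..i, v₀ x := by
        apply intervalIntegral.integral_congr
        intro x hx
        rw [uIcc_of_le hi] at hx
        exact Real.norm_of_nonneg (hv0 x (by linarith [hx.1]))
      have h2 := hC i (by linarith)
      have i1 : IntervalIntegrable v₀ volume 0 R :=
        (intervalIntegrable_iff_integrableOn_Ioc_of_le (by linarith)).2 (hvloc 0 R le_rfl)
      have i2 : IntervalIntegrable v₀ volume R i :=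
        (intervalIntegrable_iff_integrableOn_Ioc_of_le hi).2 (hvloc R i (by linarith))
      have h3 : 0 ≤ ∫ x in (0:ℝ)..R, v₀ x := by
        rw [intervalIntegral.integral_of_le (by linarith)]
        exact setIntegral_nonneg measurableSet_Ioc (fun x hx => hv0 x hx.1)
      rw [hΦ, ← intervalIntegral.integral_add_adjacent_intervals i1 i2] at h2
      simp only [id]
      rw [h1]
      have := le_abs_self ((∫ x in (0:ℝ)..R, v₀ x) + ∫ x in R..i, v₀ x)
      linarith
    have h5 : IntegrableOn (fun s : ℝ => k * s⁻¹) (Ioi R) := by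
      apply Integrable.mono' hint' (by fun_prop)
      filter_upwards [ae_restrict_mem measurableSet_Ioi] with x hx
      have hx' : R < x := hx
      have hx0 : 0 < x := by linarith
      rw [Real.norm_of_nonneg (by positivity)]
      exact hlow x hx'.le
    have h6 : IntegrableOn (fun s : ℝ => s⁻¹) (Ioi R) := by
      have := h5.const_mul k⁻¹
      refine this.congr (Filter.Eventually.of_forall fun x => ?_)
      simp only
      field_simp
    exact not_integrableOn_Ioi_inv h6
  · intro h5
    have hup : ∀ s, 1 ≤ s → v₀ s ≤ Real.sqrt (2 * μ * M) * s ^ (-(3/2) : ℝ) := by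
      intro s hs
      have hs0 : 0 < s := by linarith
      rw [hv s hs0]
      apply Real.sqrt_le_iff.2 ⟨by positivity, ?_⟩
      rw [mul_pow, Real.sq_sqrt (by positivity), ← Real.rpow_natCast (s ^ (-(3/2) : ℝ)),
        ← Real.rpow_mul hs0.le]
      have e : s ^ (-(3/2) * ((2:ℕ):ℝ) : ℝ) = (s ^ 3)⁻¹ := by
        rw [← Real.rpow_natCast, ← Real.rpow_neg hs0.le]; norm_num
      rw [e, ← div_eq_mul_inv]
      have h1 : s ^ 3 ≤ s ^ (n - 2) := pow_le_pow_right₀ hs (by omega)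
      have h2 := hmM s hs0.le
      have h3 : s ^ 3 ≤ ((n:ℝ) - 2) * s ^ (n - 2) := by nlinarith [pow_pos hs0 (n-2)]
      gcongr
    have hI1 : IntegrableOn v₀ (Ioi 1) := by
      have hg := (integrableOn_Ioi_rpow_of_lt (a := -(3/2)) (by norm_num) one_pos).const_mul
        (Real.sqrt (2 * μ * M))
      apply Integrable.mono' hg (hvmeas.mono_set (Ioi_subset_Ioi zero_le_one))
      filter_upwards [ae_restrict_mem measurableSet_Ioi] with x hx
      have hx' : 1 < x := hx
      rw [Real.norm_of_nonneg (hv0 x (by linarith))]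
      exact hup x hx'.le
    have hI : IntegrableOn v₀ (Ioi 0) := by
      rw [← Ioc_union_Ioi_eq_Ioi (zero_le_one : (0:ℝ) ≤ 1)]
      exact (hvloc 0 1 le_rfl).union hI1
    refine ⟨∫ s in Ioi (0:ℝ), v₀ s, fun r hr => ?_⟩
    rw [hΦ, intervalIntegral.integral_of_le hr, abs_of_nonneg
      (setIntegral_nonneg measurableSet_Ioc (fun x hx => hv0 x hx.1))]
    apply setIntegral_mono_set hI
    · filter_upwards [ae_restrict_mem measurableSet_Ioi] with x hx
      exact hv0 x hx
    · exact (Ioc_subset_Ioi_self).eventuallyLE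
end
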